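/- arXiv:alg-geom/9403010 — 7 statements merged into one kernel-verified Lean document; each statement's English description precedes it below -/
import Mathlib

section
/- Let 1 ≤ k ≤ n − 1 and let V¹, V², V³ be three complete flags in ℂⁿ that are mutually transversal, i.e., dim(V¹ᵢ ∩ V²ⱼ ∩ V³_m) = max(0, i + j + m − 2n) for all 1 ≤ i, j, m ≤ n. Then there is exactly one tuple (U, W, Λ¹, Λ², Λ³) of linear subspaces of ℂⁿ with dim U = k − 1, dim W = k + 1, dim Λ¹ = dim Λ² = dim Λ³ = k, satisfying: (1) U ⊆ Λⁱ ⊆ W for i = 1, 2, 3; (2) dim(Λ¹ ∩ V¹_{n−k+i−1}) ≥ i for i = 1,…,k; (3) V²₁ ⊆ Λ²; (4) Λ³ = V³_k. Moreover this tuple is given explicitly by U = V³_k ∩ V¹_{n−1}, W = V³_k + V²₁, Λ¹ = W ∩ V¹_{n−1}, Λ² = U + V²₁, Λ³ = V³_k. -/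
/-!
Everything is a dimension count. Since `Vⁱ_n = ℂⁿ`, transversality of the triple gives
transversality of pairs: `dim (V³_k ∩ V¹_{n-1}) = k - 1`, and the line `V²₁` meets both `V³_k`
and `V¹_{n-1}` trivially. Hence the five subspaces in the explicit formula have the required
dimensions, and the Schubert condition on `Λ¹ = W ∩ V¹_{n-1}` follows from
`dim (W ∩ V¹_j) ≥ (k + 1) + j - n`.

For uniqueness, the Schubert condition with `i = k` forces `Λ¹ ⊆ V¹_{n-1}`. Then
`U ⊆ V³_k ∩ V¹_{n-1}`, `V³_k + V²₁ ⊆ W`, `Λ¹ ⊆ W ∩ V¹_{n-1}` and `U + V²₁ ⊆ Λ²`, and each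
inclusion is an equality because the dimensions agree.
-/

/-- The conditions (1)-(4) on a tuple `(U, W, Λ¹, Λ², Λ³)` of subspaces of `ℂⁿ`:
dimensions `k-1, k+1, k, k, k`; all `Λⁱ` are pinched between `U` and `W`
(so they lie on the degree-one rational curve determined by `U ⊆ W`);
`Λ¹` lies in the Schubert variety `Ω_{V¹}(n-k, …, n-1)`, i.e.
`dim (Λ¹ ∩ V¹_{n-k+i-1}) ≥ i` for `i = 1, …, k`; `Λ²` lies in `Ω_{V²}(1, n-k+2, …, n)`,
i.e. `V²₁ ⊆ Λ²`; and `Λ³` is the point `V³_k`. -/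
def SchubertIncidence (n k : ℕ) (V1 V2 V3 : ℕ → Submodule ℂ (Fin n → ℂ))
    (U W Λ1 Λ2 Λ3 : Submodule ℂ (Fin n → ℂ)) : Prop :=
  Module.finrank ℂ U = k - 1 ∧ Module.finrank ℂ W = k + 1 ∧
  Module.finrank ℂ Λ1 = k ∧ Module.finrank ℂ Λ2 = k ∧ Module.finrank ℂ Λ3 = k ∧
  (U ≤ Λ1 ∧ Λ1 ≤ W) ∧ (U ≤ Λ2 ∧ Λ2 ≤ W) ∧ (U ≤ Λ3 ∧ Λ3 ≤ W) ∧
  (∀ i, 1 ≤ i → i ≤ k → i ≤ Module.finrank ℂ ↥(Λ1 ⊓ V1 (n - k + i - 1))) ∧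
  V2 1 ≤ Λ2 ∧
  Λ3 = V3 k

/-- Let `1 ≤ k ≤ n - 1` and let `V¹, V², V³` be three mutually
transversal complete flags in `ℂⁿ`.  Then there is exactly one tuple
`(U, W, Λ¹, Λ², Λ³)` of subspaces of `ℂⁿ` satisfying the incidence conditions (1)-(4),
and it is given explicitly by `U = V³_k ∩ V¹_{n-1}`, `W = V³_k + V²₁`,
`Λ¹ = W ∩ V¹_{n-1}`, `Λ² = U + V²₁`, `Λ³ = V³_k`. -/
theorem unique_line_through_three_schubert_varieties
    (n k : ℕ) (hk : 1 ≤ k) (hkn : k ≤ n - 1)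
    (V1 V2 V3 : ℕ → Submodule ℂ (Fin n → ℂ))
    (hV1rank : ∀ j, j ≤ n → Module.finrank ℂ (V1 j) = j)
    (hV2rank : ∀ j, j ≤ n → Module.finrank ℂ (V2 j) = j)
    (hV3rank : ∀ j, j ≤ n → Module.finrank ℂ (V3 j) = j)
    (hV1mono : ∀ i j, i ≤ j → j ≤ n → V1 i ≤ V1 j)
    (hV2mono : ∀ i j, i ≤ j → j ≤ n → V2 i ≤ V2 j)
    (hV3mono : ∀ i j, i ≤ j → j ≤ n → V3 i ≤ V3 j)
    (htrans : ∀ i j m, 1 ≤ i → i ≤ n → 1 ≤ j → j ≤ n → 1 ≤ m → m ≤ n →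
      Module.finrank ℂ ↥(V1 i ⊓ V2 j ⊓ V3 m) = i + j + m - 2 * n) :
    SchubertIncidence n k V1 V2 V3
        (V3 k ⊓ V1 (n - 1)) (V3 k ⊔ V2 1)
        ((V3 k ⊔ V2 1) ⊓ V1 (n - 1)) ((V3 k ⊓ V1 (n - 1)) ⊔ V2 1) (V3 k) ∧
      ∀ U W Λ1 Λ2 Λ3 : Submodule ℂ (Fin n → ℂ),
        SchubertIncidence n k V1 V2 V3 U W Λ1 Λ2 Λ3 →
          U = V3 k ⊓ V1 (n - 1) ∧ W = V3 k ⊔ V2 1 ∧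
          Λ1 = (V3 k ⊔ V2 1) ⊓ V1 (n - 1) ∧ Λ2 = (V3 k ⊓ V1 (n - 1)) ⊔ V2 1 ∧
          Λ3 = V3 k := by
  have hn : 2 ≤ n := by omega
  have top_of : ∀ S : Submodule ℂ (Fin n → ℂ), Module.finrank ℂ S = n → S = ⊤ := by
    intro S hS
    apply Submodule.eq_top_of_finrank_eq
    simpa using hS
  have hT1 : V1 n = ⊤ := top_of _ (hV1rank n le_rfl)
  have hT2 : V2 n = ⊤ := top_of _ (hV2rank n le_rfl)
  have hT3 : V3 n = ⊤ := top_of _ (hV3rank n le_rfl)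
  have r1 : Module.finrank ℂ (V1 (n - 1)) = n - 1 := hV1rank _ (by omega)
  have r2 : Module.finrank ℂ (V2 1) = 1 := hV2rank _ (by omega)
  have r3 : Module.finrank ℂ (V3 k) = k := hV3rank _ (by omega)
  have hU : Module.finrank ℂ ↥(V3 k ⊓ V1 (n - 1)) = k - 1 := by
    have h := htrans (n - 1) n k (by omega) (by omega) (by omega) le_rfl hk (by omega)
    rw [hT2, inf_top_eq, inf_comm] at h
    omega
  have h23 : V3 k ⊓ V2 1 = ⊥ := by
    have h := htrans n 1 k (by omega) le_rfl le_rfl (by omega) hk (by omega)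
    rw [hT1, top_inf_eq, inf_comm] at h
    exact Submodule.finrank_eq_zero.mp (by omega)
  have h12 : V1 (n - 1) ⊓ V2 1 = ⊥ := by
    have h := htrans (n - 1) 1 n (by omega) (by omega) le_rfl (by omega) (by omega) le_rfl
    rw [hT3, inf_top_eq] at h
    exact Submodule.finrank_eq_zero.mp (by omega)
  have hW : Module.finrank ℂ ↥(V3 k ⊔ V2 1) = k + 1 := by
    have h := Submodule.finrank_sup_add_finrank_inf_eq (V3 k) (V2 1)
    rw [h23, finrank_bot] at h
    omega
  have hΛ2 : Module.finrank ℂ ↥((V3 k ⊓ V1 (n - 1)) ⊔ V2 1) = k := by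
    have h := Submodule.finrank_sup_add_finrank_inf_eq (V3 k ⊓ V1 (n - 1)) (V2 1)
    rw [inf_assoc, h12, inf_bot_eq, finrank_bot] at h
    omega
  have hWV : ∀ j, j ≤ n → k + 1 + j ≤ n + Module.finrank ℂ ↥((V3 k ⊔ V2 1) ⊓ V1 j) := by
    intro j hj
    have h := Submodule.finrank_sup_add_finrank_inf_eq (V3 k ⊔ V2 1) (V1 j)
    have hle := Submodule.finrank_le ((V3 k ⊔ V2 1) ⊔ V1 j)
    rw [Module.finrank_fin_fun] at hle
    rw [hW, hV1rank j hj] at h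
    omega
  have hΛ1 : Module.finrank ℂ ↥((V3 k ⊔ V2 1) ⊓ V1 (n - 1)) = k := by
    have hge := hWV (n - 1) (by omega)
    have hlt : (V3 k ⊔ V2 1) ⊓ V1 (n - 1) < V3 k ⊔ V2 1 := by
      refine lt_of_le_of_ne inf_le_left fun he => ?_
      -- Equality would put the line `V²₁` inside `V¹_{n-1}`.
      have hsub : V2 1 ≤ V1 (n - 1) := le_sup_right.trans (inf_eq_left.mp he)
      rw [inf_eq_right.mpr hsub] at h12
      rw [h12, finrank_bot] at r2
      omega
    have := Submodule.finrank_lt_finrank_of_lt hlt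
    omega
  refine ⟨⟨hU, hW, hΛ1, hΛ2, r3, ⟨inf_le_inf_right _ le_sup_left, inf_le_left⟩,
    ⟨le_sup_left, sup_le_sup_right inf_le_left _⟩, ⟨inf_le_left, le_sup_left⟩, ?_,
    le_sup_right, rfl⟩, ?_⟩
  · intro i hi hik
    rw [inf_assoc, inf_eq_right.mpr (hV1mono (n - k + i - 1) (n - 1) (by omega) (by omega))]
    have := hWV (n - k + i - 1) (by omega)
    omega
  · rintro U W Λ1 Λ2 Λ3 ⟨dU, dW, d1, d2, -, ⟨hU1, h1W⟩, ⟨hU2, h2W⟩, ⟨hU3, h3W⟩, hS, hV2, rfl⟩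
    have hle : Λ1 ≤ V1 (n - 1) := by
      have h := hS k hk le_rfl
      rw [show n - k + k - 1 = n - 1 by omega] at h
      exact inf_eq_left.mp (Submodule.eq_of_le_of_finrank_le inf_le_left (d1.trans_le h))
    have eU : U = V3 k ⊓ V1 (n - 1) :=
      Submodule.eq_of_le_of_finrank_eq (le_inf hU3 (hU1.trans hle)) (dU.trans hU.symm)
    have eW : V3 k ⊔ V2 1 = W :=
      Submodule.eq_of_le_of_finrank_eq (sup_le h3W (hV2.trans h2W)) (hW.trans dW.symm)
    refine ⟨eU, eW.symm, ?_, ?_, rfl⟩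
    · exact Submodule.eq_of_le_of_finrank_eq (le_inf (eW ▸ h1W) hle) (d1.trans hΛ1.symm)
    · exact (Submodule.eq_of_le_of_finrank_eq (sup_le (eU ▸ hU2) hV2) (hΛ2.trans d2.symm)).symm
end

section
/- Fix positive integer weights d₁,…,d_k for the variables of ℂ[X₁,…,X_k] and let g₁,…,g_k ∈ ℂ[X₁,…,X_k] be weighted homogeneous polynomials of weighted degrees e₁,…,e_k such that the quotient ring ℂ[X₁,…,X_k]/(g₁,…,g_k) is finite dimensional as a ℂ-vector space. Set N = ∑ᵢ eᵢ − ∑ᵢ dᵢ. Then every weighted homogeneous polynomial F ∈ ℂ[X₁,…,X_k] of weighted degree strictly greater than N lies in the ideal (g₁,…,g_k). -/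
/-!
The proof is an exchange argument that connects `g` to the pure powers `X_j ^ c_j`, where
`c_j = D / d_j` and `D = ∏ d_i`, so that all of them have the same degree `D`.

Two properties of a family `h` of `k` homogeneous polynomials of positive degrees `e_i` are carried
along: `Reg h`, each member is a non-zero-divisor modulo any set of other members, and
`Bound d e h`, every homogeneous polynomial of degree greater than `∑ e_i - ∑ d_i` lies in the ideal
of `h`. For the pure powers both are statements about monomial ideals.

The key step is `exchange`: if `h` has both properties, `p` is homogeneous, and a power of `h_i` lies
in the ideal of the family in which `h_i` is replaced by `p`, then this new family has both
properties. Indeed `h_i ^ N = p a` modulo the other members, which makes `p` a non-zero-divisor.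
If `F` has degree above the new bound, then `a F` has degree above the bound for the family with
`h_i ^ N` in place of `h_i`, so `a F = h_i ^ N b = p a b` modulo the other members; multiplying by
`p` and cancelling `h_i ^ N` gives `F = p b` modulo the other members.

Since invertible matrices are products of transvections and diagonal matrices, any `k` independent
linear combinations of the pure powers inherit both properties (`transform_good`). Conversely,
every family whose ideal contains a power of each variable (`Primary`) can have any member replaced
by a suitable linear combination of the pure powers without losing this property: the combination
is chosen outside the minimal primes over the remaining members that do not contain the removed
one, and Krull's principal ideal theorem at the origin gives the rest (`exists_comb_primary`).
Replacing the members one after another and applying `exchange` backwards proves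
`good_of_primary`. A finite dimensional quotient makes each variable algebraic, hence nilpotent,
modulo the homogeneous ideal (`primary_of_finiteDimensional`).
-/

namespace WeightedMacaulay

open MvPolynomial

variable {k : ℕ}

/-! ### Homogeneous components and ideals generated by subfamilies -/

theorem component_mul_of_le {d : Fin k → ℕ} {h : MvPolynomial (Fin k) ℂ} {e n : ℕ}
    (hh : IsWeightedHomogeneous d h e) (a : MvPolynomial (Fin k) ℂ) (hen : e ≤ n) :
    weightedHomogeneousComponent d n (h * a) = h * weightedHomogeneousComponent d (n - e) a := by
  let := weightedGradedAlgebra ℂ d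
  rw [← weightedDecomposition.decompose'_apply, ← weightedDecomposition.decompose'_apply]
  exact DirectSum.coe_decompose_mul_of_left_mem_of_le
    (𝒜 := weightedHomogeneousSubmodule ℂ d) hh hen

theorem component_mul_of_lt {d : Fin k → ℕ} {h : MvPolynomial (Fin k) ℂ} {e n : ℕ}
    (hh : IsWeightedHomogeneous d h e) (a : MvPolynomial (Fin k) ℂ) (hen : n < e) :
    weightedHomogeneousComponent d n (h * a) = 0 := by
  let := weightedGradedAlgebra ℂ d
  rw [← weightedDecomposition.decompose'_apply]
  exact DirectSum.coe_decompose_mul_of_left_mem_of_not_le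
    (𝒜 := weightedHomogeneousSubmodule ℂ d) hh (not_le.mpr hen)

/-- The ideal generated by the members of the family `h` with index in `T`. -/
noncomputable def partIdeal (h : Fin k → MvPolynomial (Fin k) ℂ) (T : Finset (Fin k)) :
    Ideal (MvPolynomial (Fin k) ℂ) :=
  Ideal.span (h '' (T : Set (Fin k)))

theorem partIdeal_univ (h : Fin k → MvPolynomial (Fin k) ℂ) :
    partIdeal h Finset.univ = Ideal.span (Set.range h) := by
  simp [partIdeal]

theorem partIdeal_mono (h : Fin k → MvPolynomial (Fin k) ℂ) {S T : Finset (Fin k)} (hST : S ⊆ T) :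
    partIdeal h S ≤ partIdeal h T :=
  Ideal.span_mono (Set.image_mono (by exact_mod_cast hST))

theorem mem_partIdeal_insert {h : Fin k → MvPolynomial (Fin k) ℂ} {T : Finset (Fin k)} {j : Fin k}
    {F : MvPolynomial (Fin k) ℂ} :
    F ∈ partIdeal h (insert j T) ↔ ∃ a, F - h j * a ∈ partIdeal h T := by
  rw [partIdeal, Finset.coe_insert, Set.image_insert_eq, Ideal.mem_span_insert]
  constructor
  · rintro ⟨a, z, hz, rfl⟩
    exact ⟨a, by rw [mul_comm, add_sub_cancel_left]; exact hz⟩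
  · rintro ⟨a, ha⟩
    exact ⟨a, _, ha, by ring⟩

theorem self_mem_partIdeal {h : Fin k → MvPolynomial (Fin k) ℂ} {T : Finset (Fin k)} {j : Fin k}
    (hj : j ∈ T) : h j ∈ partIdeal h T :=
  Ideal.subset_span ⟨j, by exact_mod_cast hj, rfl⟩

theorem partIdeal_congr {h h' : Fin k → MvPolynomial (Fin k) ℂ} {T : Finset (Fin k)}
    (hh : ∀ j ∈ T, h j = h' j) : partIdeal h T = partIdeal h' T := by
  unfold partIdeal
  congr 1
  exact Set.image_congr (fun j hj => hh j (by exact_mod_cast hj))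

theorem partIdeal_update {h : Fin k → MvPolynomial (Fin k) ℂ} {T : Finset (Fin k)} {i : Fin k}
    (hi : i ∉ T) (g : MvPolynomial (Fin k) ℂ) :
    partIdeal (Function.update h i g) T = partIdeal h T :=
  partIdeal_congr fun _ hj => Function.update_of_ne (ne_of_mem_of_not_mem hj hi) _ _

theorem component_mem {d : Fin k → ℕ} {h : Fin k → MvPolynomial (Fin k) ℂ} {e : Fin k → ℕ}
    (hh : ∀ i, IsWeightedHomogeneous d (h i) (e i)) (T : Finset (Fin k))
    {F : MvPolynomial (Fin k) ℂ} (hF : F ∈ partIdeal h T) (n : ℕ) :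
    weightedHomogeneousComponent d n F ∈ partIdeal h T := by
  let := weightedGradedAlgebra ℂ d
  refine weightedHomogeneousComponent_mem_of_mem ℂ d (Ideal.homogeneous_span _ _ ?_) hF n
  rintro _ ⟨i, -, rfl⟩
  exact ⟨e i, hh i⟩

theorem mem_of_components_mem {d : Fin k → ℕ} {I : Ideal (MvPolynomial (Fin k) ℂ)}
    {F : MvPolynomial (Fin k) ℂ} (hF : ∀ n, weightedHomogeneousComponent d n F ∈ I) : F ∈ I := by
  rw [← sum_weightedHomogeneousComponent d F]
  exact finsum_induction (p := (· ∈ I)) I.zero_mem (fun _ _ => I.add_mem) hF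

/-- A homogeneous element of `(h_j) + I_T` is `h_j F₁` modulo `I_T` for a homogeneous `F₁` of
the expected degree; the degree `n - e j` is truncated, but then `F₁ = 0`. -/
theorem exists_homogeneous_quotient {d : Fin k → ℕ} {h : Fin k → MvPolynomial (Fin k) ℂ}
    {e : Fin k → ℕ}
    (hh : ∀ i, IsWeightedHomogeneous d (h i) (e i)) {T : Finset (Fin k)} {j : Fin k} {n : ℕ}
    {F : MvPolynomial (Fin k) ℂ} (hF : IsWeightedHomogeneous d F n)
    (hmem : F ∈ partIdeal h (insert j T)) :
    ∃ F₁, IsWeightedHomogeneous d F₁ (n - e j) ∧ (n < e j → F₁ = 0) ∧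
      F - h j * F₁ ∈ partIdeal h T := by
  obtain ⟨a, ha⟩ := mem_partIdeal_insert.mp hmem
  have hc := component_mem hh T ha n
  rw [map_sub, weightedHomogeneousComponent_eq_self hF] at hc
  by_cases hen : e j ≤ n
  · rw [component_mul_of_le (hh j) _ hen] at hc
    exact ⟨_, weightedHomogeneousComponent_isWeightedHomogeneous _ _,
      fun hlt => absurd hen (not_le.mpr hlt), hc⟩
  · rw [component_mul_of_lt (hh j) _ (not_le.mp hen)] at hc
    exact ⟨0, isWeightedHomogeneous_zero _ _ _, fun _ => rfl, by simpa using hc⟩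

theorem regular_of_homogeneous {d : Fin k → ℕ} {h : Fin k → MvPolynomial (Fin k) ℂ}
    {e : Fin k → ℕ} (hh : ∀ i, IsWeightedHomogeneous d (h i) (e i)) {T : Finset (Fin k)}
    {g : MvPolynomial (Fin k) ℂ} {c : ℕ} (hg : IsWeightedHomogeneous d g c)
    (H : ∀ n F, IsWeightedHomogeneous d F n → g * F ∈ partIdeal h T → F ∈ partIdeal h T)
    {F : MvPolynomial (Fin k) ℂ} (hF : g * F ∈ partIdeal h T) : F ∈ partIdeal h T := by
  refine mem_of_components_mem (d := d) fun n =>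
    H n _ (weightedHomogeneousComponent_isWeightedHomogeneous _ _) ?_
  have := component_mem hh T hF (c + n)
  rwa [component_mul_of_le hg _ (Nat.le_add_right _ _), Nat.add_sub_cancel_left] at this

/-! ### The exchange step -/

/-- Every `h i` is a non-zero-divisor modulo every subfamily that omits it; for homogeneous
elements of positive degree this says that `h` is a regular sequence (in any order). -/
def Reg (h : Fin k → MvPolynomial (Fin k) ℂ) : Prop :=
  ∀ (T : Finset (Fin k)) (i : Fin k), i ∉ T → ∀ F, h i * F ∈ partIdeal h T → F ∈ partIdeal h T

/-- Homogeneous elements of degree greater than `∑ e i - ∑ d i` lie in the ideal of `h`. -/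
def Bound (d e : Fin k → ℕ) (h : Fin k → MvPolynomial (Fin k) ℂ) : Prop :=
  ∀ n F, IsWeightedHomogeneous d F n → ∑ i, e i < n + ∑ i, d i → F ∈ partIdeal h Finset.univ

theorem Reg.pow {h : Fin k → MvPolynomial (Fin k) ℂ} (hr : Reg h) {T : Finset (Fin k)}
    {i : Fin k} (hi : i ∉ T) (N : ℕ) {F : MvPolynomial (Fin k) ℂ}
    (hF : h i ^ N * F ∈ partIdeal h T) : F ∈ partIdeal h T := by
  induction N with
  | zero => simpa using hF
  | succ N ih => exact ih (hr T i hi _ (by rwa [pow_succ', mul_assoc] at hF))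

section Exchange

variable {d e : Fin k → ℕ} {h : Fin k → MvPolynomial (Fin k) ℂ} {i : Fin k}
  {g a : MvPolynomial (Fin k) ℂ} {c N : ℕ}

/-- If `h i ^ N ≡ g a` modulo the other members, then `g` is a non-zero-divisor modulo every
subfamily not containing `i`.  For the full complement of `i` this is clear; one then removes one
index `j` at a time, descending along the degree of the cofactor. -/
theorem exchange_aux (hh : ∀ i, IsWeightedHomogeneous d (h i) (e i)) (he : ∀ i, 0 < e i)
    (hr : Reg h) (hg : IsWeightedHomogeneous d g c)
    (ha : h i ^ N - g * a ∈ partIdeal h (Finset.univ.erase i))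
    (T : Finset (Fin k)) (hT : i ∉ T) (F : MvPolynomial (Fin k) ℂ)
    (hF : g * F ∈ partIdeal h T) : F ∈ partIdeal h T := by
  obtain ⟨m, hm⟩ : ∃ m, (Finset.univ.erase i \ T).card = m := ⟨_, rfl⟩
  induction m generalizing T F with
  | zero =>
    have hTu : T = Finset.univ.erase i := by
      refine Finset.Subset.antisymm (fun j hj => ?_)
        (Finset.sdiff_eq_empty_iff_subset.mp (Finset.card_eq_zero.mp hm))
      exact Finset.mem_erase.mpr ⟨fun hji => hT (hji ▸ hj), Finset.mem_univ _⟩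
    subst hTu
    refine hr.pow hT N ?_
    have : h i ^ N * F = (h i ^ N - g * a) * F + a * (g * F) := by ring
    rw [this]
    exact Ideal.add_mem _ (Ideal.mul_mem_right _ _ ha) (Ideal.mul_mem_left _ _ hF)
  | succ m ih =>
    obtain ⟨j, hj⟩ : (Finset.univ.erase i \ T).Nonempty := by
      rw [← Finset.card_pos, hm]; exact Nat.succ_pos m
    have hjT : j ∉ T := (Finset.mem_sdiff.mp hj).2
    have hji : j ≠ i := (Finset.mem_erase.mp (Finset.mem_sdiff.mp hj).1).1
    have hcard : (Finset.univ.erase i \ insert j T).card = m := by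
      rw [Finset.sdiff_insert, Finset.card_erase_of_mem hj, hm, Nat.add_sub_cancel]
    have hins : i ∉ insert j T := by
      rw [Finset.mem_insert, not_or]; exact ⟨hji.symm, hT⟩
    refine regular_of_homogeneous hh hg (fun n => ?_) hF
    induction n using Nat.strong_induction_on with
    | _ n ihn =>
      intro F hFn hgF
      have hF1 := ih (insert j T) hins F
        (partIdeal_mono h (Finset.subset_insert j T) hgF) hcard
      obtain ⟨F₁, hF₁, hF₁0, hFF⟩ := exists_homogeneous_quotient hh hFn hF1
      have hgF₁ : g * F₁ ∈ partIdeal h T := by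
        refine hr T j hjT _ ?_
        have : h j * (g * F₁) = g * F - g * (F - h j * F₁) := by ring
        rw [this]
        exact Ideal.sub_mem _ hgF (Ideal.mul_mem_left _ _ hFF)
      have hF₁T : F₁ ∈ partIdeal h T := by
        by_cases hlt : n < e j
        · rw [hF₁0 hlt]; exact Ideal.zero_mem _
        · exact ihn (n - e j) (by have := he j; omega) F₁ hF₁ hgF₁
      have : F = (F - h j * F₁) + h j * F₁ := by ring
      rw [this]
      exact Ideal.add_mem _ hFF (Ideal.mul_mem_left _ _ hF₁T)

theorem exchange_reg (hh : ∀ i, IsWeightedHomogeneous d (h i) (e i)) (he : ∀ i, 0 < e i)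
    (hr : Reg h) (hg : IsWeightedHomogeneous d g c)
    (ha : h i ^ N - g * a ∈ partIdeal h (Finset.univ.erase i)) :
    Reg (Function.update h i g) := by
  have key := exchange_aux hh he hr hg ha
  intro T j hj F hF
  by_cases hji : j = i
  · subst hji
    rw [Function.update_self, partIdeal_update hj] at hF
    rw [partIdeal_update hj]
    exact key T hj F hF
  rw [Function.update_of_ne hji] at hF
  by_cases hiT : i ∈ T
  · obtain ⟨S, hiS, rfl⟩ : ∃ S, i ∉ S ∧ T = insert i S :=
      ⟨T.erase i, Finset.notMem_erase i T, (Finset.insert_erase hiT).symm⟩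
    have hjS : j ∉ S := fun hjS => hj (Finset.mem_insert_of_mem hjS)
    rw [mem_partIdeal_insert, Function.update_self, partIdeal_update hiS] at hF ⊢
    obtain ⟨G, hG⟩ := hF
    -- the relation `h j * F = g * G` makes `G` a multiple of `h j`, which can then be cancelled
    have hG' : G ∈ partIdeal h (insert j S) := by
      refine key (insert j S) (by rw [Finset.mem_insert, not_or]; exact ⟨Ne.symm hji, hiS⟩) G ?_
      refine mem_partIdeal_insert.mpr ⟨F, ?_⟩
      rw [← neg_sub]
      exact neg_mem hG
    obtain ⟨G₁, hG₁⟩ := mem_partIdeal_insert.mp hG'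
    refine ⟨G₁, hr S j hjS _ ?_⟩
    have : h j * (F - g * G₁) = (h j * F - g * G) + g * (G - h j * G₁) := by ring
    rw [this]
    exact Ideal.add_mem _ hG (Ideal.mul_mem_left _ _ hG₁)
  · rw [partIdeal_update hiT] at hF ⊢
    exact hr T j hj F hF

/-- Replacing `h i` by its `N`-th power raises the degree bound by `(N - 1) * e i`. -/
theorem bound_pow (hh : ∀ i, IsWeightedHomogeneous d (h i) (e i)) (hb : Bound d e h)
    (N n : ℕ) (G : MvPolynomial (Fin k) ℂ) (hG : IsWeightedHomogeneous d G n)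
    (hn : ∑ j, e j + N * e i < n + ∑ j, d j + e i) :
    ∃ b, G - h i ^ N * b ∈ partIdeal h (Finset.univ.erase i) := by
  induction N generalizing n G with
  | zero => exact ⟨G, by simp⟩
  | succ N ih =>
    have hmem : G ∈ partIdeal h (insert i (Finset.univ.erase i)) := by
      rw [Finset.insert_erase (Finset.mem_univ i)]
      exact hb n G hG (by rw [Nat.succ_mul] at hn; omega)
    obtain ⟨G₁, hG₁, hG₁0, hGG⟩ := exists_homogeneous_quotient hh hG hmem
    by_cases hlt : n < e i
    · rw [hG₁0 hlt] at hGG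
      exact ⟨0, by simpa using hGG⟩
    obtain ⟨b, hb'⟩ := ih (n - e i) G₁ hG₁ (by rw [Nat.succ_mul] at hn; omega)
    refine ⟨b, ?_⟩
    have : G - h i ^ (N + 1) * b = (G - h i * G₁) + h i * (G₁ - h i ^ N * b) := by ring
    rw [this]
    exact Ideal.add_mem _ hGG (Ideal.mul_mem_left _ _ hb')

theorem exchange_bound (hh : ∀ i, IsWeightedHomogeneous d (h i) (e i))
    (hr : Reg h) (hb : Bound d e h)
    (ha : h i ^ N - g * a ∈ partIdeal h (Finset.univ.erase i))
    (hadeg : IsWeightedHomogeneous d a (N * e i - c)) (hcN : c ≤ N * e i) :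
    Bound d (Function.update e i c) (Function.update h i g) := by
  intro n F hF hn
  have hsum : ∑ j, Function.update e i c j + e i = ∑ j, e j + c := by
    rw [Finset.sum_update_of_mem (Finset.mem_univ i),
      ← Finset.sum_sdiff (Finset.subset_univ {i}) (f := e), Finset.sum_singleton]
    omega
  obtain ⟨b, hb'⟩ := bound_pow (i := i) hh hb N _ (a * F) (hadeg.mul hF) (by omega)
  rw [← Finset.insert_erase (Finset.mem_univ i), mem_partIdeal_insert, Function.update_self,
    partIdeal_update (Finset.notMem_erase i _)]
  refine ⟨b, hr.pow (Finset.notMem_erase i _) N ?_⟩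
  have : h i ^ N * (F - g * b) =
      (h i ^ N - g * a) * (F - g * b) + g * (a * F - h i ^ N * b) + g * b * (h i ^ N - g * a) := by
    ring
  rw [this]
  exact Ideal.add_mem _ (Ideal.add_mem _ (Ideal.mul_mem_right _ _ ha)
    (Ideal.mul_mem_left _ _ hb')) (Ideal.mul_mem_left _ _ ha)

/-- **Exchange.** Regularity and the degree bound pass from `h` to the family in which `h i` is
replaced by `g`, provided a power of `h i` lies in the new ideal. -/
theorem exchange (hh : ∀ i, IsWeightedHomogeneous d (h i) (e i)) (he : ∀ i, 0 < e i)
    (hr : Reg h) (hb : Bound d e h) (hg : IsWeightedHomogeneous d g c)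
    (hrad : h i ∈ (partIdeal (Function.update h i g) Finset.univ).radical) :
    Reg (Function.update h i g) ∧ Bound d (Function.update e i c) (Function.update h i g) := by
  obtain ⟨N₀, hN₀⟩ := hrad
  -- the exponent is enlarged so that the cofactor of `g` has a genuine degree
  obtain ⟨N, hN, hcN⟩ : ∃ N, h i ^ N ∈ partIdeal (Function.update h i g) Finset.univ ∧
      c ≤ N * e i := by
    refine ⟨N₀ + c, by rw [pow_add]; exact Ideal.mul_mem_right _ _ hN₀, ?_⟩
    nlinarith [he i, Nat.zero_le N₀, Nat.zero_le c]
  have hh' : ∀ j, IsWeightedHomogeneous d (Function.update h i g j) (Function.update e i c j) := by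
    intro j
    by_cases hji : j = i
    · subst hji; simpa using hg
    · simpa [Function.update_of_ne hji] using hh j
  rw [← Finset.insert_erase (Finset.mem_univ i)] at hN
  have hdeg : IsWeightedHomogeneous d (h i ^ N) (N * e i) := by simpa using (hh i).pow N
  obtain ⟨a, hadeg, -, ha⟩ := exists_homogeneous_quotient hh' hdeg hN
  rw [Function.update_self, partIdeal_update (Finset.notMem_erase i _)] at ha
  rw [Function.update_self] at hadeg
  exact ⟨exchange_reg hh he hr hg ha, exchange_bound hh hr hb ha hadeg hcN⟩

end Exchange

/-! ### Choosing the element to exchange -/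

/-- Every variable is nilpotent modulo the ideal of `h`. -/
def Primary (h : Fin k → MvPolynomial (Fin k) ℂ) : Prop :=
  ∀ j, X j ∈ (partIdeal h Finset.univ).radical

/-- The linear combination of the pure powers `X j ^ c j` with coefficient vector `v`. -/
noncomputable def comb (c : Fin k → ℕ) (v : Fin k → ℂ) : MvPolynomial (Fin k) ℂ :=
  ∑ j, C (v j) * X j ^ c j

theorem comb_homogeneous {d c : Fin k → ℕ} {D : ℕ} (hc : ∀ j, c j * d j = D) (v : Fin k → ℂ) :
    IsWeightedHomogeneous d (comb c v) D := by
  refine IsWeightedHomogeneous.sum _ _ _ fun j _ => ?_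
  have := ((isWeightedHomogeneous_X ℂ d j).pow (c j)).C_mul (v j)
  rwa [smul_eq_mul, hc j] at this

theorem mem_of_constantCoeff_eq_zero {I : Ideal (MvPolynomial (Fin k) ℂ)} (hI : ∀ j, X j ∈ I)
    {F : MvPolynomial (Fin k) ℂ} (hF : constantCoeff F = 0) : F ∈ I := by
  have h1 : F ∈ Ideal.span (X '' (Set.univ : Set (Fin k)) : Set (MvPolynomial (Fin k) ℂ)) := by
    rw [mem_ideal_span_X_image]
    intro m hm
    by_contra hcon
    push Not at hcon
    have hm0 : m = 0 := Finsupp.ext fun j => hcon j (Set.mem_univ j)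
    rw [hm0, mem_support_iff] at hm
    exact hm hF
  refine (Ideal.span_le.mpr ?_) h1
  rintro _ ⟨j, -, rfl⟩
  exact hI j

theorem constantCoeff_eq_zero {d : Fin k → ℕ} {F : MvPolynomial (Fin k) ℂ} {n : ℕ}
    (hF : IsWeightedHomogeneous d F n) (hn : 0 < n) : constantCoeff F = 0 := by
  refine hF.coeff_eq_zero 0 ?_
  rw [map_zero]
  exact hn.ne

/-- Krull's principal ideal theorem in `ℂ[X] / p`: if the prime `m` is minimal over `p` and one
further element `f`, then no prime lies strictly between `p` and `m`, so that `p < q ≤ m` forces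
`q = m` and `f ∈ q`. -/
theorem mem_of_prime_between {p q m : Ideal (MvPolynomial (Fin k) ℂ)} [p.IsPrime] [q.IsPrime]
    [m.IsPrime] {f : MvPolynomial (Fin k) ℂ} (hpq : p < q) (hqm : q ≤ m) (hfm : f ∈ m)
    (hmin : ∀ r : Ideal (MvPolynomial (Fin k) ℂ), r.IsPrime → p ≤ r → f ∈ r → m ≤ r) :
    f ∈ q := by
  by_contra hfq
  have hqm' : q < m := lt_of_le_of_ne hqm fun h => hfq (h ▸ hfm)
  have hm : m ∈ (p ⊔ Ideal.span {f}).minimalPrimes := by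
    refine ⟨⟨inferInstance, sup_le (hpq.le.trans hqm) ?_⟩, ?_⟩
    · rwa [Ideal.span_singleton_le_iff_mem]
    · rintro r ⟨hr, hle⟩ -
      exact hmin r hr (le_sup_left.trans hle)
        ((Ideal.span_singleton_le_iff_mem r).mp (le_sup_right.trans hle))
  have hht := Ideal.map_height_le_one_of_mem_minimalPrimes hm
  have hker : RingHom.ker (Ideal.Quotient.mk p) = p := Ideal.mk_ker
  have hsurj : Function.Surjective (Ideal.Quotient.mk p) := Ideal.Quotient.mk_surjective
  have hcm : ∀ I : Ideal (MvPolynomial (Fin k) ℂ), p ≤ I →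
      (I.map (Ideal.Quotient.mk p)).comap (Ideal.Quotient.mk p) = I := by
    intro I hI
    rw [Ideal.comap_map_of_surjective _ hsurj, ← RingHom.ker_eq_comap_bot, hker, sup_eq_left.mpr hI]
  have hmp : (m.map (Ideal.Quotient.mk p)).IsPrime :=
    Ideal.map_isPrime_of_surjective hsurj (hker.trans_le (hpq.le.trans hqm))
  have hqp : (q.map (Ideal.Quotient.mk p)).IsPrime :=
    Ideal.map_isPrime_of_surjective hsurj (hker.trans_le hpq.le)
  have hlt : q.map (Ideal.Quotient.mk p) < m.map (Ideal.Quotient.mk p) := by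
    refine lt_of_le_of_ne (Ideal.map_mono hqm) fun heq => hqm'.ne ?_
    rw [← hcm q hpq.le, heq, hcm m (hpq.le.trans hqm)]
  have hq1 := (Ideal.height_le_iff (n := 1)).mp (by exact_mod_cast hht) _ hqp hlt
  have hq0 : (q.map (Ideal.Quotient.mk p)).height ≤ (0 : ℕ) := by
    rw [Nat.cast_one, Order.lt_one_iff] at hq1
    simp [hq1]
  have hbot : (⊥ : Ideal (MvPolynomial (Fin k) ℂ ⧸ p)) < q.map (Ideal.Quotient.mk p) := by
    refine bot_lt_iff_ne_bot.mpr fun heq => hpq.ne ?_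
    rw [← hcm q hpq.le, heq, ← RingHom.ker_eq_comap_bot, hker]
  have := (Ideal.height_le_iff (n := 0)).mp hq0 ⊥ Ideal.isPrime_bot hbot
  simp at this

/-- In a zero-dimensional system any single member can be replaced by a combination of the
`X j ^ c j`: a generic one avoids the minimal primes of the remaining members that do not
contain `h i`. -/
theorem exists_comb_primary {d c e : Fin k → ℕ} {D : ℕ} (hd : ∀ j, 0 < d j)
    (hc : ∀ j, c j * d j = D)
    {h : Fin k → MvPolynomial (Fin k) ℂ}
    (hh : ∀ i, IsWeightedHomogeneous d (h i) (e i)) (he : ∀ i, 0 < e i) (hp : Primary h)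
    (i : Fin k) : ∃ v, Primary (Function.update h i (comb c v)) := by
  classical
  set J := partIdeal h (Finset.univ.erase i) with hJ
  -- the coefficient vectors of the combinations lying in `p`
  let W : Ideal (MvPolynomial (Fin k) ℂ) → Subspace ℂ (Fin k → ℂ) := fun p =>
    { carrier := {v | comb c v ∈ p}
      add_mem' := by
        intro a b ha hb
        have : comb c (a + b) = comb c a + comb c b := by
          simp [comb, add_mul, Finset.sum_add_distrib]
        simpa [this] using p.add_mem ha hb
      zero_mem' := by simp [comb]
      smul_mem' := by
        intro t a ha
        have : comb c (t • a) = C t * comb c a := by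
          simp [comb, Finset.mul_sum, mul_assoc]
        simpa [this] using p.mul_mem_left (C t) ha }
  have hfinite := J.finite_minimalPrimes_of_isNoetherianRing
  let s : Finset (Subspace ℂ (Fin k → ℂ)) :=
    (hfinite.toFinset.filter fun p => h i ∉ p).image W
  have hs : ⊤ ∉ s := by
    intro htop
    obtain ⟨p, hps, hWp⟩ := Finset.mem_image.mp htop
    obtain ⟨hpm, hip⟩ := Finset.mem_filter.mp hps
    have hpm' : p ∈ J.minimalPrimes := hfinite.mem_toFinset.mp hpm
    have : p.IsPrime := hpm'.1.1
    refine hip (mem_of_constantCoeff_eq_zero (fun j => ?_) (constantCoeff_eq_zero (hh i) (he i)))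
    have hj : Pi.single j (1 : ℂ) ∈ W p := hWp ▸ Submodule.mem_top
    have hj' : comb c (Pi.single j (1 : ℂ)) ∈ p := hj
    have hcomb : comb c (Pi.single j (1 : ℂ)) = X j ^ c j := by
      rw [comb, Finset.sum_eq_single j]
      · simp
      · intro b _ hb; simp [Pi.single_eq_of_ne hb]
      · simp
    rw [hcomb] at hj'
    exact this.mem_of_pow_mem _ hj'
  obtain ⟨v, hv⟩ := (Set.ne_univ_iff_exists_notMem _).mp (Subspace.biUnion_ne_univ_of_top_notMem hs)
  have hv' : ∀ p ∈ J.minimalPrimes, h i ∉ p → comb c v ∉ p := by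
    intro p hpm hip hmem
    refine hv (Set.mem_biUnion (x := W p) ?_ hmem)
    exact Finset.mem_image_of_mem W
      (Finset.mem_filter.mpr ⟨hfinite.mem_toFinset.mpr hpm, hip⟩)
  refine ⟨v, ?_⟩
  set h' := Function.update h i (comb c v) with hh'def
  set I := partIdeal h' Finset.univ with hI
  have hJI : J ≤ I := by
    rw [hJ, ← partIdeal_update (Finset.notMem_erase i Finset.univ) (comb c v)]
    exact partIdeal_mono _ (Finset.subset_univ _)
  have hvI : comb c v ∈ I := by
    have := self_mem_partIdeal (h := h') (Finset.mem_univ i)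
    rwa [hh'def, Function.update_self] at this
  have hle : ∀ q : Ideal (MvPolynomial (Fin k) ℂ), J ≤ q → h i ∈ q →
      partIdeal h Finset.univ ≤ q := by
    intro q hJq hiq F hF
    rw [← Finset.insert_erase (Finset.mem_univ i)] at hF
    obtain ⟨a, ha⟩ := mem_partIdeal_insert.mp hF
    have := q.add_mem (hJq ha) (q.mul_mem_right a hiq)
    simpa using this
  -- `m` is the maximal ideal of the origin
  set m := RingHom.ker (constantCoeff (R := ℂ) (σ := Fin k)) with hm
  have : m.IsPrime := RingHom.ker_isPrime _
  have him : h i ∈ m := constantCoeff_eq_zero (hh i) (he i)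
  -- at the origin, a power of `h i` lies in the new ideal
  have hloc : ∃ t ∉ m, ∃ n, t * h i ^ n ∈ I := by
    by_contra hcon
    push Not at hcon
    obtain ⟨q, hq, hIq, hdisj⟩ := Ideal.exists_le_prime_disjoint I
      (m.primeCompl ⊔ Submonoid.powers (h i)) (by
        rw [Set.disjoint_left]
        intro x hxI hx
        obtain ⟨t, ht, y, ⟨n, rfl⟩, rfl⟩ := Submonoid.mem_sup.mp hx
        exact hcon t ht n hxI)
    have hiq : h i ∉ q := fun hmem => Set.disjoint_left.mp hdisj hmem
      (Submonoid.mem_sup_right (Submonoid.mem_powers _))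
    have hqm : q ≤ m := by
      intro x hx
      by_contra hxm
      exact Set.disjoint_left.mp hdisj hx (Submonoid.mem_sup_left hxm)
    obtain ⟨p, hpm, hpq⟩ := Ideal.exists_minimalPrimes_le (hJI.trans hIq)
    have : p.IsPrime := hpm.1.1
    have hip : h i ∉ p := fun hmem => hiq (hpq hmem)
    have hlt : p < q := lt_of_le_of_ne hpq fun heq => hv' p hpm hip (heq ▸ hIq hvI)
    refine hiq (mem_of_prime_between hlt hqm him fun r hr hpr hir => ?_)
    intro F hF
    refine mem_of_constantCoeff_eq_zero (fun j => ?_) hF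
    have hrle := hle r (hpm.1.2.trans hpr) hir
    exact hr.radical_le_iff.mpr hrle (hp j)
  obtain ⟨t, htm, n, htn⟩ := hloc
  -- the lowest component of `t` is a nonzero constant
  have hpow : h i ∈ I.radical := by
    refine ⟨n, ?_⟩
    have hhom : ∀ j, IsWeightedHomogeneous d (h' j) (Function.update e i D j) := by
      intro j
      by_cases hji : j = i
      · subst hji; simpa [hh'def] using comb_homogeneous hc v
      · simpa [hh'def, Function.update_of_ne hji] using hh j
    have hdeg : IsWeightedHomogeneous d (h i ^ n) (n * e i) := by simpa using (hh i).pow n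
    have hcomp := component_mem hhom Finset.univ htn (n * e i)
    rw [mul_comm t, component_mul_of_le hdeg _ le_rfl, Nat.sub_self,
      weightedHomogeneousComponent_zero _ fun j => (hd j).ne', mul_comm (h i ^ n)] at hcomp
    have ht0 : coeff 0 t ≠ 0 := htm
    have hunit : C (coeff 0 t)⁻¹ * (C (coeff 0 t) * h i ^ n) = h i ^ n := by
      rw [← mul_assoc, ← C_mul, inv_mul_cancel₀ ht0, C_1, one_mul]
    rw [← hunit]
    exact Ideal.mul_mem_left _ _ hcomp
  intro j
  have hrad : (partIdeal h Finset.univ).radical ≤ I.radical :=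
    Ideal.radical_le_radical_iff.mpr (hle _ (hJI.trans Ideal.le_radical) hpow)
  exact hrad (hp j)

/-! ### Pure powers of the variables and their invertible linear combinations -/

theorem partIdeal_powers (c : Fin k → ℕ) (T : Finset (Fin k)) {F : MvPolynomial (Fin k) ℂ} :
    F ∈ partIdeal (fun j => X j ^ c j) T ↔ ∀ m ∈ F.support, ∃ j ∈ T, c j ≤ m j := by
  have himg : (fun j => (X j : MvPolynomial (Fin k) ℂ) ^ c j) '' (T : Set (Fin k)) =
      (fun s => monomial s (1 : ℂ)) '' ((fun j => Finsupp.single j (c j)) '' (T : Set (Fin k))) := by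
    rw [Set.image_image]
    exact Set.image_congr fun j _ => X_pow_eq_monomial
  rw [partIdeal, himg, mem_ideal_span_monomial_image]
  simp

theorem reg_powers (c : Fin k → ℕ) : Reg fun j => (X j : MvPolynomial (Fin k) ℂ) ^ c j := by
  intro T i hi F hF
  rw [partIdeal_powers] at hF ⊢
  intro m hm
  have hmem : Finsupp.single i (c i) + m ∈ (X i ^ c i * F).support := by
    rw [mem_support_iff, X_pow_eq_monomial, coeff_monomial_mul, one_mul]
    exact mem_support_iff.mp hm
  obtain ⟨j, hj, hle⟩ := hF _ hmem
  refine ⟨j, hj, ?_⟩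
  have hij : i ≠ j := fun hij => hi (hij ▸ hj)
  simpa [Finsupp.single_apply, hij] using hle

theorem bound_powers {d c : Fin k → ℕ} {D : ℕ} (hc : ∀ j, c j * d j = D) :
    Bound d (fun _ => D) fun j => (X j : MvPolynomial (Fin k) ℂ) ^ c j := by
  intro n F hF hn
  rw [partIdeal_powers]
  intro m hm
  by_contra hcon
  push Not at hcon
  have hw : Finsupp.weight d m = n := hF (mem_support_iff.mp hm)
  rw [Finsupp.weight_apply, Finsupp.sum_fintype _ _ (by simp)] at hw
  have hle : ∑ j, (m j • d j + d j) ≤ ∑ _j : Fin k, D := by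
    refine Finset.sum_le_sum fun j _ => ?_
    rw [← hc j, smul_eq_mul, ← Nat.succ_mul]
    exact Nat.mul_le_mul_right _ (hcon j (Finset.mem_univ j))
  rw [Finset.sum_add_distrib] at hle
  beta_reduce at hn
  omega

/-- The family obtained from `h` by applying the matrix `M`. -/
noncomputable def transform (M : Matrix (Fin k) (Fin k) ℂ) (h : Fin k → MvPolynomial (Fin k) ℂ) :
    Fin k → MvPolynomial (Fin k) ℂ :=
  fun i => ∑ j, C (M i j) * h j

theorem transform_homogeneous {d : Fin k → ℕ} {D : ℕ} (M : Matrix (Fin k) (Fin k) ℂ)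
    {h : Fin k → MvPolynomial (Fin k) ℂ} (hh : ∀ i, IsWeightedHomogeneous d (h i) D) (i : Fin k) :
    IsWeightedHomogeneous d (transform M h i) D :=
  IsWeightedHomogeneous.sum _ _ _ fun j _ => (hh j).C_mul (M i j)

theorem transform_mul (A B : Matrix (Fin k) (Fin k) ℂ) (h : Fin k → MvPolynomial (Fin k) ℂ) :
    transform (A * B) h = transform A (transform B h) := by
  funext i
  simp only [transform, Matrix.mul_apply, map_sum, map_mul, Finset.sum_mul, Finset.mul_sum]
  rw [Finset.sum_comm]
  simp only [mul_assoc]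

theorem partIdeal_scale {u : Fin k → ℂ} (hu : ∀ i, u i ≠ 0) (h : Fin k → MvPolynomial (Fin k) ℂ)
    (T : Finset (Fin k)) : partIdeal (fun i => C (u i) * h i) T = partIdeal h T := by
  apply le_antisymm
  · refine Ideal.span_le.mpr ?_
    rintro _ ⟨j, hj, rfl⟩
    exact Ideal.mul_mem_left _ _ (self_mem_partIdeal hj)
  · refine Ideal.span_le.mpr ?_
    rintro _ ⟨j, hj, rfl⟩
    have : h j = C (u j)⁻¹ * (C (u j) * h j) := by
      rw [← mul_assoc, ← C_mul, inv_mul_cancel₀ (hu j), C_1, one_mul]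
    rw [this]
    exact Ideal.mul_mem_left _ _ (self_mem_partIdeal (h := fun i => C (u i) * h i) hj)

theorem reg_scale {u : Fin k → ℂ} (hu : ∀ i, u i ≠ 0) {h : Fin k → MvPolynomial (Fin k) ℂ}
    (hr : Reg h) : Reg fun i => C (u i) * h i := by
  intro T i hi F hF
  rw [partIdeal_scale hu] at hF ⊢
  refine hr T i hi F ?_
  have : h i * F = C (u i)⁻¹ * (C (u i) * h i * F) := by
    rw [← mul_assoc, ← mul_assoc, ← C_mul, inv_mul_cancel₀ (hu i), C_1, one_mul]
  rw [this]
  exact Ideal.mul_mem_left _ _ hF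

/-- Invertible matrices preserve regularity and the degree bound for families of constant degree:
a transvection is an exchange step, and a diagonal matrix does not change the ideals. -/
theorem transform_good {d : Fin k → ℕ} {D : ℕ} (hD : 0 < D) (M : Matrix (Fin k) (Fin k) ℂ)
    (hM : M.det ≠ 0) (h : Fin k → MvPolynomial (Fin k) ℂ)
    (hh : ∀ i, IsWeightedHomogeneous d (h i) D) (hr : Reg h) (hb : Bound d (fun _ => D) h) :
    Reg (transform M h) ∧ Bound d (fun _ => D) (transform M h) := by
  revert h
  refine Matrix.diagonal_transvection_induction_of_det_ne_zero
    (fun M => ∀ h : Fin k → MvPolynomial (Fin k) ℂ, (∀ i, IsWeightedHomogeneous d (h i) D) →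
      Reg h → Bound d (fun _ => D) h →
      Reg (transform M h) ∧ Bound d (fun _ => D) (transform M h)) M hM ?_ ?_ ?_
  · intro u hu h hh hr hb
    rw [Matrix.det_diagonal, Finset.prod_ne_zero_iff] at hu
    have hu' : ∀ i, u i ≠ 0 := fun i => hu i (Finset.mem_univ i)
    have heq : transform (Matrix.diagonal u) h = fun i => C (u i) * h i := by
      funext i
      rw [transform, Finset.sum_eq_single i]
      · simp
      · intro j _ hj; simp [Matrix.diagonal_apply_ne' _ hj]
      · simp
    rw [heq]
    refine ⟨reg_scale hu' hr, fun n F hF hn => ?_⟩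
    rw [partIdeal_scale hu']
    exact hb n F hF hn
  · intro t h hh hr hb
    obtain ⟨i, j, hij, x⟩ := t
    have heq : transform (Matrix.TransvectionStruct.toMatrix ⟨i, j, hij, x⟩) h =
        Function.update h i (h i + C x * h j) := by
      funext l
      simp only [transform, Matrix.TransvectionStruct.toMatrix, Matrix.transvection,
        Matrix.add_apply, map_add, add_mul, Finset.sum_add_distrib]
      have h1 : ∑ y, C ((1 : Matrix (Fin k) (Fin k) ℂ) l y) * h y = h l := by
        rw [Finset.sum_eq_single l]
        · simp
        · intro b _ hb; simp [Matrix.one_apply_ne' hb]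
        · simp
      rw [h1]
      by_cases hl : l = i
      · subst hl
        rw [Function.update_self, Finset.sum_eq_single j]
        · simp
        · intro b _ hb; simp [Matrix.single_apply_of_ne, hb.symm]
        · simp
      · rw [Function.update_of_ne hl, Finset.sum_eq_zero, add_zero]
        intro b _
        rw [Matrix.single_apply_of_ne _ _ _ _ _ (by tauto)]
        simp
    have hex := exchange (i := i) (g := h i + C x * h j) (c := D) hh (fun _ => hD) hr hb
      ((hh i).add ((hh j).C_mul x)) (by
        refine Ideal.le_radical ?_
        have hi := self_mem_partIdeal (h := Function.update h i (h i + C x * h j))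
          (Finset.mem_univ i)
        have hj := self_mem_partIdeal (h := Function.update h i (h i + C x * h j))
          (Finset.mem_univ j)
        rw [Function.update_self] at hi
        rw [Function.update_of_ne hij.symm] at hj
        have := Ideal.sub_mem _ hi (Ideal.mul_mem_left _ (C x) hj)
        rwa [add_sub_cancel_right] at this)
    rw [heq]
    have he : Function.update (fun _ : Fin k => D) i D = fun _ => D := Function.update_eq_self i _
    rw [he] at hex
    exact hex
  · intro A B _ _ hA hB h hh hr hb
    rw [transform_mul]
    obtain ⟨hr', hb'⟩ := hB h hh hr hb
    exact hA _ (transform_homogeneous B hh) hr' hb'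

/-- A kernel vector of `M` yields, after extracting `c j`-th roots of its entries, a common zero
of the family away from the origin. -/
theorem det_ne_zero_of_primary {c : Fin k → ℕ} (hc : ∀ j, 0 < c j) (M : Matrix (Fin k) (Fin k) ℂ)
    (hp : Primary fun i => comb c (M i)) : M.det ≠ 0 := by
  intro hdet
  obtain ⟨v, hv0, hv⟩ := Matrix.exists_mulVec_eq_zero_iff.mpr hdet
  choose z hz using fun j => IsAlgClosed.exists_pow_nat_eq (v j) (hc j)
  have hle : partIdeal (fun i => comb c (M i)) Finset.univ ≤ RingHom.ker (eval z) := by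
    refine Ideal.span_le.mpr ?_
    rintro _ ⟨i, -, rfl⟩
    have := congrFun hv i
    simpa [comb, hz, Matrix.mulVec, dotProduct, RingHom.mem_ker] using this
  have hker : (RingHom.ker (eval z)).IsPrime := RingHom.ker_isPrime _
  refine hv0 (funext fun j => ?_)
  have hzj : X j ∈ RingHom.ker (eval z) := hker.radical_le_iff.mpr hle (hp j)
  rw [RingHom.mem_ker, eval_X] at hzj
  rw [← hz j, hzj, zero_pow (hc j).ne', Pi.zero_apply]

/-! ### Zero-dimensional homogeneous systems -/

/-- Induction on the number of members that are not combinations of the pure powers. -/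
theorem good_of_primary {d c : Fin k → ℕ} {D : ℕ} (hd : ∀ j, 0 < d j) (hD : 0 < D)
    (hc : ∀ j, c j * d j = D) (s : Finset (Fin k)) :
    ∀ (h : Fin k → MvPolynomial (Fin k) ℂ) (e : Fin k → ℕ),
      (∀ i, IsWeightedHomogeneous d (h i) (e i)) → (∀ i, 0 < e i) → Primary h →
      (∀ i ∉ s, e i = D ∧ ∃ v, h i = comb c v) → Reg h ∧ Bound d e h := by
  induction s using Finset.induction_on with
  | empty =>
    intro h e hh he hp hs
    have hc0 : ∀ j, 0 < c j := fun j => Nat.pos_of_ne_zero fun h0 => by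
      have := hc j; rw [h0, zero_mul] at this; omega
    choose M hM using fun i => (hs i (Finset.notMem_empty i)).2
    have he' : e = fun _ => D := funext fun i => (hs i (Finset.notMem_empty i)).1
    have hh' : h = fun i => comb c (M i) := funext hM
    subst he'
    rw [hh'] at hp ⊢
    refine transform_good hD M (det_ne_zero_of_primary hc0 M hp) (fun j => X j ^ c j)
      (fun j => ?_) (reg_powers c) (bound_powers hc)
    have := (isWeightedHomogeneous_X ℂ d j).pow (c j)
    rwa [smul_eq_mul, hc j] at this
  | insert i s _ ih =>
    intro h e hh he hp hs
    obtain ⟨v, hv⟩ := exists_comb_primary hd hc hh he hp i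
    have hhom : ∀ j, IsWeightedHomogeneous d (Function.update h i (comb c v) j)
        (Function.update e i D j) := by
      intro j
      by_cases hji : j = i
      · subst hji; simpa using comb_homogeneous hc v
      · simpa [Function.update_of_ne hji] using hh j
    have hpos : ∀ j, 0 < Function.update e i D j := by
      intro j
      by_cases hji : j = i
      · subst hji; simpa using hD
      · simpa [Function.update_of_ne hji] using he j
    obtain ⟨hr, hb⟩ := ih _ _ hhom hpos hv (by
      intro j hj
      by_cases hji : j = i
      · subst hji; exact ⟨by simp, v, by simp⟩
      · rw [Function.update_of_ne hji, Function.update_of_ne hji]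
        exact hs j (by rw [Finset.mem_insert, not_or]; exact ⟨hji, hj⟩))
    have hex := exchange (i := i) (g := h i) (c := e i) hhom hpos hr hb (hh i) (by
      rw [Function.update_self, Function.update_idem, Function.update_eq_self]
      exact mem_of_constantCoeff_eq_zero hp (constantCoeff_eq_zero (comb_homogeneous hc v) hD))
    rwa [Function.update_idem, Function.update_eq_self, Function.update_idem,
      Function.update_eq_self] at hex

/-- A nonzero polynomial relation for `X j` modulo a homogeneous ideal can be split into its
components, each of which is a scalar multiple of a power of `X j`. -/
theorem primary_of_finiteDimensional {d e : Fin k → ℕ} (hd : ∀ j, 0 < d j)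
    {g : Fin k → MvPolynomial (Fin k) ℂ} (hg : ∀ i, IsWeightedHomogeneous d (g i) (e i))
    (hfin : FiniteDimensional ℂ (MvPolynomial (Fin k) ℂ ⧸ Ideal.span (Set.range g))) :
    Primary g := by
  intro j
  obtain ⟨q, hq, hq0⟩ := IsIntegral.isAlgebraic (R := ℂ)
    (Algebra.IsIntegral.isIntegral (R := ℂ) (Ideal.Quotient.mk (Ideal.span (Set.range g)) (X j)))
  have hmem : Polynomial.aeval (X j : MvPolynomial (Fin k) ℂ) q ∈ partIdeal g Finset.univ := by
    rw [partIdeal_univ, ← Ideal.Quotient.eq_zero_iff_mem, ← hq0]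
    exact (Polynomial.aeval_algHom_apply (Ideal.Quotient.mkₐ ℂ (Ideal.span (Set.range g)))
      (X j) q).symm
  obtain ⟨n, hn⟩ : ∃ n, q.coeff n ≠ 0 := by
    by_contra hcon
    push Not at hcon
    exact hq (Polynomial.ext fun n => by simp [hcon n])
  refine ⟨n, ?_⟩
  have hcomp := component_mem hg Finset.univ hmem (n * d j)
  have heq : weightedHomogeneousComponent d (n * d j)
      (Polynomial.aeval (X j : MvPolynomial (Fin k) ℂ) q) = C (q.coeff n) * X j ^ n := by
    rw [Polynomial.aeval_eq_sum_range, map_sum]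
    have hterm : ∀ l, weightedHomogeneousComponent d (n * d j)
        (q.coeff l • (X j : MvPolynomial (Fin k) ℂ) ^ l) =
        if l = n then C (q.coeff n) * X j ^ n else 0 := by
      intro l
      have hl : IsWeightedHomogeneous d (C (q.coeff l) * (X j : MvPolynomial (Fin k) ℂ) ^ l)
          (l * d j) := by
        simpa using ((isWeightedHomogeneous_X ℂ d j).pow l).C_mul (q.coeff l)
      rw [← C_mul']
      split_ifs with hln
      · subst hln
        exact weightedHomogeneousComponent_eq_self hl
      · exact hl.weightedHomogeneousComponent_ne _
          fun h => hln (Nat.eq_of_mul_eq_mul_right (hd j) h).symm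
    rw [Finset.sum_congr rfl fun l _ => hterm l, Finset.sum_ite_eq', if_pos]
    exact Finset.mem_range.mpr (Nat.lt_succ_of_le (Polynomial.le_natDegree_of_ne_zero hn))
  rw [heq] at hcomp
  have hunit : C (q.coeff n)⁻¹ * (C (q.coeff n) * (X j : MvPolynomial (Fin k) ℂ) ^ n) = X j ^ n := by
    rw [← mul_assoc, ← C_mul, inv_mul_cancel₀ hn, C_1, one_mul]
  rw [← hunit]
  exact Ideal.mul_mem_left _ _ hcomp

end WeightedMacaulay

open WeightedMacaulay MvPolynomial in
/-- **weighted Macaulay theorem.** Fix positive weights `d₁,…,d_k` on the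
variables of `ℂ[X₁,…,X_k]`, and let `g₁,…,g_k` be weighted homogeneous of weighted degrees
`e₁,…,e_k` with `ℂ[X₁,…,X_k]/(g₁,…,g_k)` finite dimensional over `ℂ`.  Put
`N = ∑ eᵢ − ∑ dᵢ`.  Then every weighted homogeneous polynomial of weighted degree
strictly greater than `N` lies in the ideal `(g₁,…,g_k)`. -/
theorem weighted_homogeneous_above_socle_degree_mem_ideal
    (k : ℕ) (d : Fin k → ℕ) (hd : ∀ i, 0 < d i)
    (g : Fin k → MvPolynomial (Fin k) ℂ) (e : Fin k → ℕ)
    (hg : ∀ i, MvPolynomial.IsWeightedHomogeneous d (g i) (e i))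
    (hfin : FiniteDimensional ℂ (MvPolynomial (Fin k) ℂ ⧸ Ideal.span (Set.range g)))
    (F : MvPolynomial (Fin k) ℂ) (m : ℕ)
    (hF : MvPolynomial.IsWeightedHomogeneous d F m)
    (hm : (∑ i, (e i : ℤ)) - (∑ i, (d i : ℤ)) < (m : ℤ)) :
    F ∈ Ideal.span (Set.range g) := by
  rw [← partIdeal_univ]
  have hprim := primary_of_finiteDimensional hd hg hfin
  -- a vanishing member is declared to have degree `1`, so that all degrees are positive
  -- unless the ideal contains a nonzero constant
  let e' : Fin k → ℕ := fun i => if g i = 0 then 1 else e i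
  have hg' : ∀ i, IsWeightedHomogeneous d (g i) (e' i) := by
    intro i
    by_cases h0 : g i = 0
    · rw [h0]; exact isWeightedHomogeneous_zero _ _ _
    · simpa [e', h0] using hg i
  by_cases hpos : ∀ i, 0 < e' i
  · have hDpos : 0 < ∏ i, d i := Finset.prod_pos fun i _ => hd i
    obtain ⟨hr, hb⟩ := good_of_primary (c := fun j => (∏ i, d i) / d j) hd hDpos
      (fun j => Nat.div_mul_cancel (Finset.dvd_prod_of_mem d (Finset.mem_univ j)))
      Finset.univ g e' hg' hpos hprim (fun i hi => absurd (Finset.mem_univ i) hi)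
    by_cases hz : ∃ i, g i = 0
    · obtain ⟨i, hi⟩ := hz
      -- zero is a non-zero-divisor only modulo the unit ideal
      refine partIdeal_mono g (Finset.empty_subset _) (hr ∅ i (Finset.notMem_empty i) F ?_)
      rw [hi, zero_mul]
      exact Ideal.zero_mem _
    · push Not at hz
      have he' : e' = e := funext fun i => by simp [e', hz i]
      rw [he'] at hb
      refine hb m F hF ?_
      have : ((∑ i, e i : ℕ) : ℤ) - ((∑ i, d i : ℕ) : ℤ) < (m : ℤ) := by exact_mod_cast hm
      omega
  · push Not at hpos
    obtain ⟨i, hi⟩ := hpos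
    have h0 : g i ≠ 0 := fun h0 => by simp [e', h0] at hi
    have hgi : g i = C (coeff 0 (g i)) := by
      have h1 := weightedHomogeneousComponent_eq_self (hg' i)
      rw [Nat.le_zero.mp hi, weightedHomogeneousComponent_zero _ fun j => (hd j).ne'] at h1
      exact h1.symm
    have hc0 : coeff 0 (g i) ≠ 0 := fun hc => h0 (by rw [hgi, hc, C_0])
    have htop : partIdeal g Finset.univ = ⊤ := by
      refine Ideal.eq_top_of_isUnit_mem _ (self_mem_partIdeal (Finset.mem_univ i)) ?_
      rw [hgi]
      exact (IsUnit.mk0 _ hc0).map C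
    rw [htop]
    exact Submodule.mem_top
end

section
/- Let g₁,…,g_k ∈ ℂ[X₁,…,X_k] be polynomials such that R = ℂ[X₁,…,X_k]/(g₁,…,g_k) is finite dimensional as a ℂ-vector space, let Z ⊆ ℂᵏ be the (finite) set of common zeros of g₁,…,g_k, and for z ∈ Z let m_z ⊂ R be the maximal ideal of classes of polynomials vanishing at z and μ(z) = dim_ℂ of the localization of R at m_z. Then for every F ∈ ℂ[X₁,…,X_k], the trace of the ℂ-linear endomorphism of R given by multiplication by the class of F equals ∑_{z ∈ Z} μ(z) · F(z). -/
/-!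
The ring `A = ℂ[X₁,…,X_k]/(g₁,…,g_k)` is Artinian, so it is the product of its localizations
at its finitely many primes, and the trace of multiplication by an element splits accordingly
(`trace_eq_sum_trace_localization`). By the Nullstellensatz, `z ↦ m z` is a bijection from the
common zeros onto the primes of `A`. In the local factor at `m z` the element `F - F(z)` is
nilpotent, hence has trace zero, so `F` has the same trace there as the scalar `F(z)`, namely
`μ(z) · F(z)` (`trace_localization_eq_finrank_mul`).
-/

theorem trace_pi_eq_sum_trace {K ι : Type*} [Field K] [Fintype ι] (S : ι → Type*)
    [∀ i, CommRing (S i)] [∀ i, Algebra K (S i)] [∀ i, FiniteDimensional K (S i)]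
    (x : Π i, S i) :
    Algebra.trace K (Π i, S i) x = ∑ i, Algebra.trace K (S i) (x i) := by
  classical
  let b := fun i => Module.finBasis K (S i)
  rw [Algebra.trace_eq_matrix_trace (Pi.basis b), Matrix.trace, Fintype.sum_sigma]
  refine Finset.sum_congr rfl fun i _ => ?_
  rw [Algebra.trace_eq_matrix_trace (b i), Matrix.trace]
  refine Finset.sum_congr rfl fun j _ => ?_
  simp [Algebra.leftMulMatrix_eq_repr_mul, Pi.basis_apply]

theorem finite_localization_primeCompl {K A : Type*} [Field K] [CommRing A] [Algebra K A]
    [FiniteDimensional K A] (p : Ideal A) [p.IsPrime] :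
    FiniteDimensional K (Localization p.primeCompl) := by
  have : IsArtinianRing A := .of_finite K A
  exact Module.Finite.of_surjective
    (IsScalarTower.toAlgHom K A (Localization p.primeCompl)).toLinearMap
    (IsArtinianRing.localization_surjective p.primeCompl _)

theorem trace_eq_sum_trace_localization {K A : Type*} [Field K] [CommRing A] [Algebra K A]
    [FiniteDimensional K A] [Fintype (PrimeSpectrum A)] (a : A) :
    Algebra.trace K A a = ∑ p : PrimeSpectrum A,
      Algebra.trace K (Localization p.asIdeal.primeCompl) (algebraMap A _ a) := by
  have : IsArtinianRing A := .of_finite K A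
  have := fun p : PrimeSpectrum A => finite_localization_primeCompl (K := K) p.asIdeal
  rw [← Algebra.trace_eq_of_algEquiv
    ((PrimeSpectrum.toPiLocalizationEquiv A).restrictScalars K) a]
  exact trace_pi_eq_sum_trace (fun p : PrimeSpectrum A => Localization p.asIdeal.primeCompl) _

theorem trace_localization_eq_finrank_mul {K A : Type*} [Field K] [CommRing A] [Algebra K A]
    [FiniteDimensional K A] (p : Ideal A) [p.IsPrime] (a : A) (c : K)
    (h : a - algebraMap K A c ∈ p) :
    Algebra.trace K (Localization p.primeCompl) (algebraMap A _ a) =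
      (Module.finrank K (Localization p.primeCompl) : K) * c := by
  have : IsArtinianRing A := .of_finite K A
  -- In an Artinian local ring the maximal ideal consists of nilpotents.
  have hn : IsNilpotent (algebraMap A (Localization p.primeCompl) (a - algebraMap K A c)) := by
    have hmem : algebraMap A (Localization p.primeCompl) (a - algebraMap K A c) ∈
        IsLocalRing.maximalIdeal (Localization p.primeCompl) :=
      (IsLocalization.AtPrime.to_map_mem_maximal_iff _ p _).2 h
    rwa [← IsLocalRing.jacobson_eq_maximalIdeal ⊥ bot_ne_top,
      IsArtinianRing.jacobson_eq_radical] at hmem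
  have ht := (Algebra.isNilpotent_trace_of_isNilpotent (R := K) hn).eq_zero
  rw [map_sub, map_sub, sub_eq_zero, ← IsScalarTower.algebraMap_apply,
    Algebra.trace_algebraMap] at ht
  rw [ht, nsmul_eq_mul]

/-- Let `g₁,…,g_k ∈ ℂ[X₁,…,X_k]` with `R = ℂ[X₁,…,X_k]/(g₁,…,g_k)`
finite dimensional over `ℂ`, let `Z` be the finite set of common zeros of the `gᵢ`, and
for `z ∈ Z` let `m_z ⊂ R` be the maximal ideal of classes of polynomials vanishing at `z`
and `μ(z) = dim_ℂ R_{m_z}` the local multiplicity.  Then for every polynomial `F`, the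
trace of multiplication by the class of `F` on `R` is `∑_{z ∈ Z} μ(z) · F(z)`. -/
theorem trace_of_multiplication_eq_sum_local_multiplicities
    (k : ℕ) (g : Fin k → MvPolynomial (Fin k) ℂ)
    (I : Ideal (MvPolynomial (Fin k) ℂ)) (hI : I = Ideal.span (Set.range g))
    (hfin : FiniteDimensional ℂ (MvPolynomial (Fin k) ℂ ⧸ I))
    (Z : Finset (Fin k → ℂ))
    (hZ : ∀ z : Fin k → ℂ, z ∈ Z ↔ ∀ i, MvPolynomial.eval z (g i) = 0)
    (m : (Fin k → ℂ) → Ideal (MvPolynomial (Fin k) ℂ ⧸ I))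
    (hm : ∀ z, m z = (RingHom.ker (MvPolynomial.eval z)).map (Ideal.Quotient.mk I))
    (hprime : ∀ z ∈ Z, (m z).IsPrime)
    (F : MvPolynomial (Fin k) ℂ) :
    LinearMap.trace ℂ (MvPolynomial (Fin k) ℂ ⧸ I)
        (LinearMap.mulLeft ℂ (Ideal.Quotient.mk I F)) =
      ∑ z ∈ Z.attach,
        (Module.finrank ℂ (Localization (@Ideal.primeCompl _ _ (m z.1) (hprime z.1 z.2))) : ℂ) *
          MvPolynomial.eval z.1 F := by
  classical
  have : IsArtinianRing (MvPolynomial (Fin k) ℂ ⧸ I) := .of_finite ℂ _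
  have : Fintype (PrimeSpectrum (MvPolynomial (Fin k) ℂ ⧸ I)) := Fintype.ofFinite _
  have hIz : ∀ z : Fin k → ℂ, I ≤ RingHom.ker (MvPolynomial.eval z) ↔ z ∈ Z := fun z => by
    rw [hI, Ideal.span_le, hZ, Set.range_subset_iff]
    rfl
  have hmem : ∀ z ∈ Z, ∀ f : MvPolynomial (Fin k) ℂ,
      Ideal.Quotient.mk I f ∈ m z ↔ MvPolynomial.eval z f = 0 := fun z hz f => by
    rw [hm, Ideal.mem_quotient_iff_mem ((hIz z).2 hz), RingHom.mem_ker]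
  refine (trace_eq_sum_trace_localization (K := ℂ) (Ideal.Quotient.mk I F)).trans ?_
  symm
  refine Finset.sum_bij (fun z _ => ⟨m z.1, hprime z.1 z.2⟩) (fun _ _ => Finset.mem_univ _)
    ?_ ?_ ?_
  · rintro ⟨z, hz⟩ - ⟨w, hw⟩ - hzw
    replace hzw : m z = m w := congrArg PrimeSpectrum.asIdeal hzw
    refine Subtype.ext (funext fun i => ?_)
    have h := (hmem z hz (MvPolynomial.X i - MvPolynomial.C (z i))).2 (by simp)
    rw [hzw, hmem w hw] at h
    simpa [sub_eq_zero, eq_comm] using h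
  · intro p _
    have hmax : (p.asIdeal.comap (Ideal.Quotient.mk I)).IsMaximal :=
      Ideal.comap_isMaximal_of_surjective _ Ideal.Quotient.mk_surjective
    obtain ⟨z, hz⟩ := MvPolynomial.isMaximal_iff_eq_vanishingIdeal_singleton.1 hmax
    have hker : p.asIdeal.comap (Ideal.Quotient.mk I) = RingHom.ker (MvPolynomial.eval z) := by
      rw [hz]
      ext f
      simp [MvPolynomial.aeval_eq_eval]
    have hzZ : z ∈ Z := by
      rw [← hIz, ← hker]
      exact Ideal.mk_ker.symm.le.trans (Ideal.comap_mono bot_le)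
    refine ⟨⟨z, hzZ⟩, Finset.mem_attach _ _, PrimeSpectrum.ext ?_⟩
    change m z = p.asIdeal
    rw [hm, ← hker, Ideal.map_comap_of_surjective _ Ideal.Quotient.mk_surjective]
  · rintro ⟨z, hz⟩ -
    have := hprime z hz
    refine (trace_localization_eq_finrank_mul (m z) _ _ ?_).symm
    change Ideal.Quotient.mk I F - Ideal.Quotient.mk I (MvPolynomial.C _) ∈ m z
    rw [← map_sub, hmem z hz]
    simp
end

section
/- Let g₁,…,g_k ∈ ℂ[X₁,…,X_k] be polynomials such that R = ℂ[X₁,…,X_k]/(g₁,…,g_k) is finite dimensional as a ℂ-vector space, and let Z ⊆ ℂᵏ be the (finite) set of common zeros of g₁,…,g_k. Then the number of points of Z is at most dim_ℂ R, with equality if and only if the Jacobian determinant det(∂gᵢ/∂Xⱼ) is nonzero at every point of Z (i.e., if and only if 0 is a regular value of the map g = (g₁,…,g_k) : ℂᵏ → ℂᵏ). -/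
/-!
Evaluation at the points of `Z` is a surjective linear map `R → ℂ^Z` (interpolation), whence
`#Z ≤ dim R`, and equality holds iff this map is injective, i.e. iff every polynomial vanishing
on `Z` lies in `I`. It remains to see that this condition is equivalent to regularity.

* If every polynomial vanishing on `Z` lies in `I`, take `z ∈ Z` and a polynomial `e` that is `1`
  at `z` and `0` on the rest of `Z`. Each `(X_j - z_j) e` vanishes on `Z`, hence is a combination
  `∑ aᵢ gᵢ`; differentiating at `z` exhibits a left inverse of the Jacobian matrix at `z`
  (`jacobian_ne_zero_of_mem`).
* Conversely, let `𝔪` be the maximal ideal of `z ∈ Z`. Taylor expansion to first order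
  (`taylor_mem`) and invertibility of the Jacobian matrix give `𝔪 ≤ I + 𝔪²` (`ker_le_sup_sq`).
  Nakayama's lemma for the image of `𝔪` in `R` yields `r ∉ 𝔪` with `r 𝔪 ⊆ I`
  (`exists_mul_mem`). So for `f` vanishing on `Z`, the colon ideal `(I : f)` lies in no maximal
  ideal: by the Nullstellensatz a maximal ideal containing `I` comes from a point of `Z`.
  Hence `1 ∈ (I : f)`, i.e. `f ∈ I` (`mem_of_vanishing`).
-/

open MvPolynomial

/-- First-order Taylor expansion at `z`: the remainder lies in `𝔪²`, where `𝔪` is the ideal of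
polynomials vanishing at `z`. -/
lemma taylor_mem {k : ℕ} (z : Fin k → ℂ) (p : MvPolynomial (Fin k) ℂ) :
    p - C (eval z p) - ∑ l, C (eval z (pderiv l p)) * (X l - C (z l)) ∈
      (RingHom.ker (eval z)) ^ 2 := by
  have hX : ∀ l, (X l - C (z l) : MvPolynomial (Fin k) ℂ) ∈ RingHom.ker (eval z) := by
    intro l; simp [RingHom.mem_ker]
  induction p using MvPolynomial.induction_on with
  | C a => simp
  | add p q hp hq =>
    convert add_mem hp hq using 1
    simp only [map_add, add_mul, Finset.sum_add_distrib]
    ring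
  | mul_X p n hp =>
    set L := ∑ l, C (eval z (pderiv l p)) * (X l - C (z l)) with hL
    have hLm : L ∈ RingHom.ker (eval z) :=
      Ideal.sum_mem _ fun l _ => Ideal.mul_mem_left _ _ (hX l)
    have key : ∑ l, C (eval z (pderiv l (p * X n))) * (X l - C (z l)) =
        C (z n) * L + C (eval z p) * (X n - C (z n)) := by
      have : ∀ l, C (eval z (pderiv l (p * X n))) * (X l - C (z l)) =
          C (z n) * (C (eval z (pderiv l p)) * (X l - C (z l))) +
            (if l = n then C (eval z p) * (X n - C (z n)) else 0) := by
        intro l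
        rw [Derivation.leibniz, pderiv_X]
        by_cases h : l = n
        · subst h
          simp
          ring
        · simp [h, Ne.symm h]
          ring
      rw [Finset.sum_congr rfl fun l _ => this l, Finset.sum_add_distrib, ← Finset.mul_sum]
      simp [hL]
    rw [key]
    have h2 : L * (X n - C (z n)) ∈ (RingHom.ker (eval z)) ^ 2 := by
      rw [pow_two]; exact Ideal.mul_mem_mul hLm (hX n)
    convert add_mem (Ideal.mul_mem_right (X n) _ hp) h2 using 1
    simp only [map_mul, eval_X]
    ring

lemma ker_le_sup_sq {k : ℕ} (g : Fin k → MvPolynomial (Fin k) ℂ) (z : Fin k → ℂ)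
    (hz : ∀ i, eval z (g i) = 0)
    (hdet : eval z (Matrix.det (Matrix.of fun i j : Fin k => pderiv j (g i))) ≠ 0) :
    RingHom.ker (eval z) ≤ Ideal.span (Set.range g) ⊔ (RingHom.ker (eval z)) ^ 2 := by
  set K := Ideal.span (Set.range g) ⊔ (RingHom.ker (eval z)) ^ 2 with hK
  set J : Matrix (Fin k) (Fin k) ℂ := Matrix.of fun i j => eval z (pderiv j (g i)) with hJ
  have hJdet : IsUnit J.det := by
    rw [isUnit_iff_ne_zero]
    rw [RingHom.map_det] at hdet
    exact hdet
  have h1 : ∀ i, ∑ l, C (J i l) * (X l - C (z l)) ∈ K := by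
    intro i
    have ht := taylor_mem z (g i)
    rw [hz i, map_zero, sub_zero] at ht
    have hgi : g i ∈ K := Ideal.mem_sup_left (Ideal.subset_span ⟨i, rfl⟩)
    have := sub_mem hgi (Ideal.mem_sup_right ht : _ ∈ K)
    simpa [hJ] using this
  have h2 : ∀ j, (X j - C (z j) : MvPolynomial (Fin k) ℂ) ∈ K := by
    intro j
    have h3 : ∑ i, C (J⁻¹ j i) * ∑ l, C (J i l) * (X l - C (z l)) ∈ K :=
      Ideal.sum_mem _ fun i _ => Ideal.mul_mem_left _ _ (h1 i)
    convert h3 using 1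
    simp_rw [Finset.mul_sum]
    rw [Finset.sum_comm]
    have h4 : ∀ l, ∑ i, C (J⁻¹ j i) * (C (J i l) * (X l - C (z l))) =
        C ((1 : Matrix (Fin k) (Fin k) ℂ) j l) * (X l - C (z l)) := by
      intro l
      rw [← Matrix.nonsing_inv_mul J hJdet, Matrix.mul_apply, map_sum, Finset.sum_mul]
      simp [mul_assoc]
    rw [Finset.sum_congr rfl fun l _ => h4 l, Finset.sum_eq_single j]
    · simp
    · intro l _ hl; simp [Matrix.one_apply_ne hl.symm]
    · simp
  intro f hf
  have ht := taylor_mem z f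
  rw [(RingHom.mem_ker).1 hf, map_zero, sub_zero] at ht
  have := add_mem (Ideal.mem_sup_right ht : _ ∈ K)
    (Ideal.sum_mem K fun l (_ : l ∈ Finset.univ) =>
      Ideal.mul_mem_left _ (C (eval z (pderiv l f))) (h2 l))
  simpa using this

/-- At a regular zero `z`, the ideal `I` agrees locally with the maximal ideal of `z`: a single
polynomial not vanishing at `z` multiplies that maximal ideal into `I`. -/
lemma exists_mul_mem {k : ℕ} (I : Ideal (MvPolynomial (Fin k) ℂ)) (z : Fin k → ℂ)
    (h : RingHom.ker (eval z) ≤ I ⊔ (RingHom.ker (eval z)) ^ 2) :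
    ∃ r : MvPolynomial (Fin k) ℂ, eval z r = 1 ∧
      ∀ f, eval z f = 0 → r * f ∈ I := by
  set m := RingHom.ker (eval z) with hm
  obtain ⟨r, hr, hr'⟩ := Submodule.exists_sub_one_mem_and_smul_eq_zero_of_fg_of_le_smul m
    (Submodule.map (Submodule.mkQ I) m) ((IsNoetherian.noetherian m).map _) (by
      have := Submodule.map_mono (f := Submodule.mkQ I) h
      rw [Submodule.map_sup, Submodule.mkQ_map_self, bot_sup_eq, pow_two,
        ← smul_eq_mul, Submodule.map_smul''] at this
      exact this)
  refine ⟨r, ?_, fun f hf => ?_⟩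
  · rw [hm, RingHom.mem_ker, map_sub, map_one] at hr
    exact sub_eq_zero.1 hr
  · have := hr' (Submodule.mkQ I f) (Submodule.mem_map_of_mem (by simpa [hm] using hf))
    rw [← map_smul, Submodule.mkQ_apply, Submodule.Quotient.mk_eq_zero] at this
    exact this

lemma mem_of_vanishing {k : ℕ} (g : Fin k → MvPolynomial (Fin k) ℂ)
    (hdet : ∀ z, (∀ i, eval z (g i) = 0) →
      eval z (Matrix.det (Matrix.of fun i j : Fin k => pderiv j (g i))) ≠ 0)
    (f : MvPolynomial (Fin k) ℂ) (hf : ∀ z, (∀ i, eval z (g i) = 0) → eval z f = 0) :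
    f ∈ Ideal.span (Set.range g) := by
  set I := Ideal.span (Set.range g) with hI
  -- `Q` is the colon ideal `(I : f)`.
  set Q : Ideal (MvPolynomial (Fin k) ℂ) := Submodule.comap (LinearMap.mulRight _ f) I with hQ
  have hmem : ∀ r, r ∈ Q ↔ r * f ∈ I := fun r => by simp [hQ]
  by_contra hfI
  have hne : Q ≠ ⊤ := by
    intro h
    apply hfI
    have : (1 : MvPolynomial (Fin k) ℂ) ∈ Q := by rw [h]; trivial
    simpa using (hmem 1).1 this
  obtain ⟨M, hM, hQM⟩ := Ideal.exists_le_maximal Q hne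
  obtain ⟨z, rfl⟩ := (MvPolynomial.isMaximal_iff_eq_vanishingIdeal_singleton (K := ℂ)).1 hM
  have hz : ∀ i, eval z (g i) = 0 := by
    intro i
    have : g i ∈ Q := (hmem _).2 (Ideal.mul_mem_right _ _ (Ideal.subset_span ⟨i, rfl⟩))
    simpa [mem_vanishingIdeal_singleton_iff] using hQM this
  obtain ⟨r, hr1, hr⟩ := exists_mul_mem I z (ker_le_sup_sq g z hz (hdet z hz))
  have := hQM ((hmem r).2 (hr f (hf z hz)))
  simp [mem_vanishingIdeal_singleton_iff, hr1] at this

lemma exists_interpolation {k : ℕ} (Z : Finset (Fin k → ℂ)) (z : Fin k → ℂ) :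
    ∃ e : MvPolynomial (Fin k) ℂ, eval z e = 1 ∧ ∀ w ∈ Z, w ≠ z → eval w e = 0 := by
  have h : ∀ w : Fin k → ℂ, ∃ p : MvPolynomial (Fin k) ℂ,
      eval z p = 1 ∧ (w ≠ z → eval w p = 0) := by
    intro w
    by_cases hw : w = z
    · exact ⟨1, by simp, fun h => absurd hw h⟩
    · obtain ⟨j, hj⟩ := Function.ne_iff.1 hw
      have : z j - w j ≠ 0 := sub_ne_zero.2 (Ne.symm hj)
      exact ⟨C (z j - w j)⁻¹ * (X j - C (w j)), by simp [this], fun _ => by simp⟩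
  choose p hp1 hp2 using h
  refine ⟨∏ w ∈ Z, p w, ?_, fun w hw hwz => ?_⟩
  · simp [map_prod, hp1]
  · rw [map_prod]
    exact Finset.prod_eq_zero hw (hp2 w hwz)

lemma jacobian_ne_zero_of_mem {k : ℕ} (g : Fin k → MvPolynomial (Fin k) ℂ)
    (Z : Finset (Fin k → ℂ))
    (hZ : ∀ z : Fin k → ℂ, z ∈ Z ↔ ∀ i, eval z (g i) = 0)
    (hI : ∀ f : MvPolynomial (Fin k) ℂ, (∀ z ∈ Z, eval z f = 0) → f ∈ Ideal.span (Set.range g))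
    (z : Fin k → ℂ) (hz : z ∈ Z) :
    eval z (Matrix.det (Matrix.of fun i j : Fin k => pderiv j (g i))) ≠ 0 := by
  obtain ⟨e, he1, he0⟩ := exists_interpolation Z z
  have hg := (hZ z).1 hz
  have h : ∀ j, ∃ a : Fin k → MvPolynomial (Fin k) ℂ,
      ∑ i, a i * g i = (X j - C (z j)) * e := by
    intro j
    refine Ideal.mem_span_range_iff_exists_fun.1 (hI _ fun w hw => ?_)
    by_cases hwz : w = z
    · simp [hwz]
    · simp [he0 w hw hwz]
  choose a ha using h
  set J : Matrix (Fin k) (Fin k) ℂ := Matrix.of fun i j => eval z (pderiv j (g i)) with hJ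
  have hmul : (Matrix.of fun j i => eval z (a j i)) * J = 1 := by
    ext j l
    have := congrArg (fun p => eval z (pderiv l p)) (ha j)
    simp only [map_sum, Derivation.leibniz, smul_eq_mul, map_add, map_mul, hg, zero_mul,
      add_zero, map_sub, eval_X, eval_C, sub_self, he1, one_mul, pderiv_X, pderiv_C,
      sub_zero, zero_add] at this
    rw [Matrix.mul_apply]
    simp only [hJ, Matrix.of_apply]
    rw [this, Matrix.one_apply, Pi.single_apply]
    by_cases h : j = l <;> simp [h]
  rw [RingHom.map_det]
  change J.det ≠ 0
  intro h0
  have := congrArg Matrix.det hmul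
  simp [Matrix.det_mul, h0] at this


/-- Let `g₁,…,g_k ∈ ℂ[X₁,…,X_k]` with `R = ℂ[X₁,…,X_k]/(g₁,…,g_k)`
finite dimensional over `ℂ`, and let `Z` be the (finite) set of common zeros of the `gᵢ`.
Then `#Z ≤ dim_ℂ R`, with equality if and only if the Jacobian determinant
`det(∂gᵢ/∂Xⱼ)` is nonzero at every point of `Z` (i.e. `0` is a regular value of `g`). -/
theorem card_zeros_le_dim_quotient_iff_regular
    (k : ℕ) (g : Fin k → MvPolynomial (Fin k) ℂ)
    (I : Ideal (MvPolynomial (Fin k) ℂ)) (hI : I = Ideal.span (Set.range g))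
    (hfin : FiniteDimensional ℂ (MvPolynomial (Fin k) ℂ ⧸ I))
    (Z : Finset (Fin k → ℂ))
    (hZ : ∀ z : Fin k → ℂ, z ∈ Z ↔ ∀ i, MvPolynomial.eval z (g i) = 0) :
    Z.card ≤ Module.finrank ℂ (MvPolynomial (Fin k) ℂ ⧸ I) ∧
    (Z.card = Module.finrank ℂ (MvPolynomial (Fin k) ℂ ⧸ I) ↔
      ∀ z ∈ Z,
        MvPolynomial.eval z
          (Matrix.det (Matrix.of fun i j : Fin k => MvPolynomial.pderiv j (g i))) ≠ 0) := by

  let ev : MvPolynomial (Fin k) ℂ →ₐ[ℂ] (Z → ℂ) := AlgHom.pi fun z => aeval z.1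
  have hev : ∀ f z, ev f z = eval z.1 f := fun f z => by simp [ev]
  have hIev : ∀ f ∈ I, ev f = 0 := by
    intro f hf
    have : I ≤ RingHom.ker ev := by
      rw [hI, Ideal.span_le]
      rintro _ ⟨i, rfl⟩
      rw [SetLike.mem_coe, RingHom.mem_ker]
      ext z
      rw [hev]
      exact (hZ z).1 z.2 i
    exact this hf
  let φ : (MvPolynomial (Fin k) ℂ ⧸ I) →ₐ[ℂ] (Z → ℂ) := Ideal.Quotient.liftₐ I ev hIev
  have hφ : ∀ f, φ (Ideal.Quotient.mk I f) = ev f := fun f => rfl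
  have hsurj : Function.Surjective φ.toLinearMap := by
    intro c
    choose e he1 he0 using exists_interpolation Z
    refine ⟨Ideal.Quotient.mk I (∑ z : Z, C (c z) * e z), ?_⟩
    rw [AlgHom.toLinearMap_apply, hφ]
    ext w
    rw [hev, map_sum, Finset.sum_eq_single w]
    · simp [he1]
    · intro z _ hzw
      have : (w : Fin k → ℂ) ≠ z := fun h => hzw (Subtype.ext h.symm)
      simp [he0 z w w.2 this]
    · simp
  have hcard : Module.finrank ℂ (Z → ℂ) = Z.card := by simp
  have hinj : Function.Injective φ.toLinearMap ↔
      ∀ f : MvPolynomial (Fin k) ℂ, (∀ z ∈ Z, eval z f = 0) → f ∈ I := by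
    rw [injective_iff_map_eq_zero]
    constructor
    · intro h f hf
      refine Ideal.Quotient.eq_zero_iff_mem.1 (h _ ?_)
      rw [AlgHom.toLinearMap_apply, hφ]
      ext z
      rw [hev]
      exact hf z z.2
    · intro h x hx
      obtain ⟨f, rfl⟩ := Ideal.Quotient.mk_surjective x
      refine Ideal.Quotient.eq_zero_iff_mem.2 (h f fun z hz => ?_)
      have h1 : ev f = 0 := hx
      rw [← hev f ⟨z, hz⟩, h1]
      rfl
  refine ⟨hcard ▸ LinearMap.finrank_le_finrank_of_surjective hsurj, fun heq => ?_, fun hreg => ?_⟩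
  · have hi := (LinearMap.injective_iff_surjective_of_finrank_eq_finrank
      (heq.symm.trans hcard.symm)).2 hsurj
    subst hI
    exact jacobian_ne_zero_of_mem g Z hZ (hinj.1 hi)
  · have hi : Function.Injective φ.toLinearMap := by
      rw [hinj]
      intro f hf
      rw [hI]
      exact mem_of_vanishing g (fun z hz => hreg z ((hZ z).2 hz)) f
        fun z hz => hf z ((hZ z).2 hz)
    rw [← hcard]
    exact (LinearEquiv.ofBijective φ.toLinearMap ⟨hi, hsurj⟩).finrank_eq.symm
end

section
/- Let 1 ≤ k ≤ n and let c ∈ ℂ with c ≠ 0. Then the polynomial system Y_{n−k+1} = 0, …, Y_{n−1} = 0, Yₙ + c = 0 has exactly binomial(n, k) solutions in ℂᵏ, and at every solution the Jacobian determinant of the map (Y_{n−k+1}, …, Y_{n−1}, Yₙ + c) : ℂᵏ → ℂᵏ is nonzero. -/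
/-!
Encode `x ∈ ℂᵏ` as the polynomial `P = 1 + x₁ t + ⋯ + x_k tᵏ`. The recursion says that
`∑ Y_j(x) tʲ = P⁻¹` as power series, so `x` solves the system exactly when the truncation `Q` of
this series to degree `≤ n - k` satisfies `P Q = 1 + c tⁿ` (`sol_iff`). Hence solutions correspond
to the factors of degree `k` and constant term `1` of `F = 1 + c tⁿ`. As `c ≠ 0`, `F` has `n`
distinct roots, none of them `0`, and such factors correspond to the `k`-element sets of roots
(`ncard_factors`).

For the Jacobian, let `v` be a kernel vector at a solution. Differentiating `P · P⁻¹ = 1` along `v`,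
and truncating to degree `≤ n - k` again, yields a polynomial `Q'` with `P Q' + t W Q = 0`, where
`W = ∑ v_{i+1} tⁱ`. Since `F` is separable, `P` is coprime to `Q`, and it is coprime to `t` as
`P(0) = 1`. So `P ∣ W`, whereas `deg W < k = deg P`; therefore `W = 0` and `v = 0`.
-/

/-- The Segre polynomials `Y_j ∈ ℂ[X₁,…,X_k]`: `Y₀ = 1` and
`Y_j = -∑_{i=1}^{min(j,k)} Xᵢ · Y_{j-i}` for `j ≥ 1`. -/
noncomputable def segreY (k : ℕ) : ℕ → MvPolynomial (Fin k) ℂ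
  | 0 => 1
  | j + 1 =>
    -∑ i : Fin (min (j + 1) k),
      MvPolynomial.X (Fin.castLE (min_le_right (j + 1) k) i) * segreY k (j - i.val)
  decreasing_by omega

/-- The quantum relations of `G(k,n)`: the polynomial map
`(Y_{n-k+1}, …, Y_{n-1}, Yₙ + c) : ℂᵏ → ℂᵏ`. -/
noncomputable def quantumRelation (k n : ℕ) (c : ℂ) (i : Fin k) : MvPolynomial (Fin k) ℂ :=
  if i.val + 1 < k then segreY k (n - k + 1 + i.val) else segreY k n + MvPolynomial.C c

open Polynomial

/-! ### The generating series -/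

/-- `∑_{i < k} aᵢ tⁱ`, the polynomial with coefficient vector `a`. -/
noncomputable def vecPoly {k : ℕ} (a : Fin k → ℂ) : ℂ[X] := ∑ i : Fin k, C (a i) * X ^ (i : ℕ)

/-- `1 + x₁ t + ⋯ + x_k tᵏ`, the total Chern class. -/
noncomputable def chernPoly {k : ℕ} (x : Fin k → ℂ) : ℂ[X] := 1 + X * vecPoly x

lemma vecPoly_coeff {k : ℕ} (a : Fin k → ℂ) (i : Fin k) : (vecPoly a).coeff i = a i := by
  simp only [vecPoly, finsetSum_coeff, coeff_C_mul, coeff_X_pow]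
  rw [Finset.sum_eq_single i]
  · simp
  · intro b _ hb
    have : (i : ℕ) ≠ b := fun h => hb (Fin.ext h.symm)
    simp [this]
  · simp

lemma vecPoly_degree_lt {k : ℕ} (a : Fin k → ℂ) : (vecPoly a).degree < k := by
  rw [degree_lt_iff_coeff_zero]
  intro m hm
  simp only [vecPoly, finsetSum_coeff, coeff_C_mul, coeff_X_pow]
  refine Finset.sum_eq_zero fun i _ => ?_
  have : m ≠ i := by omega
  simp [this]

lemma chernPoly_natDegree_le {k : ℕ} (x : Fin k → ℂ) : (chernPoly x).natDegree ≤ k := by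
  rw [natDegree_le_iff_coeff_eq_zero]
  intro m hm
  obtain ⟨m, rfl⟩ : ∃ m', m = m' + 1 := ⟨m - 1, by omega⟩
  simp only [chernPoly, coeff_add, coeff_one, coeff_X_mul]
  have := (degree_lt_iff_coeff_zero _ _).1 (vecPoly_degree_lt x) m (by omega)
  simp [this]

lemma chernPoly_coeff_zero {k : ℕ} (x : Fin k → ℂ) : (chernPoly x).coeff 0 = 1 := by
  simp [chernPoly]

lemma chernPoly_coeff_succ {k : ℕ} (x : Fin k → ℂ) (i : Fin k) :
    (chernPoly x).coeff (i + 1) = x i := by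
  simp [chernPoly, coeff_one, vecPoly_coeff]

lemma chernPoly_surj {k : ℕ} (G : ℂ[X]) (hG : G.natDegree ≤ k) (h0 : G.coeff 0 = 1) :
    chernPoly (fun i : Fin k => G.coeff (i + 1)) = G := by
  ext m
  rcases m with _ | m
  · rw [chernPoly_coeff_zero, h0]
  · by_cases hm : m < k
    · exact chernPoly_coeff_succ (fun i : Fin k => G.coeff (i + 1)) ⟨m, hm⟩
    · rw [coeff_eq_zero_of_natDegree_lt ((chernPoly_natDegree_le _).trans_lt (by omega)),
        coeff_eq_zero_of_natDegree_lt (by omega)]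

lemma segreY_zero (k : ℕ) : segreY k 0 = 1 := by rw [segreY]

lemma segreY_succ (k j : ℕ) : segreY k (j + 1) =
    -∑ i : Fin k, if (i : ℕ) ≤ j then MvPolynomial.X i * segreY k (j - i) else 0 := by
  rw [segreY, ← Finset.sum_filter]
  congr 1
  refine Finset.sum_bij (fun i _ => Fin.castLE (min_le_right (j + 1) k) i) ?_ ?_ ?_ ?_
  · intro i _
    have := i.2
    simp only [Finset.mem_filter, Finset.mem_univ, true_and, Fin.val_castLE]
    omega
  · intro a _ b _ h
    simpa using h
  · intro b hb
    simp only [Finset.mem_filter, Finset.mem_univ, true_and] at hb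
    exact ⟨⟨b, by have := b.2; omega⟩, Finset.mem_univ _, rfl⟩
  · intro i _
    rfl

lemma coeff_vecPoly_mul {k : ℕ} (a : Fin k → ℂ) (f : ℕ → ℂ) (j : ℕ) :
    PowerSeries.coeff j ((vecPoly a : PowerSeries ℂ) * PowerSeries.mk f) =
      ∑ i : Fin k, if (i : ℕ) ≤ j then a i * f (j - i) else 0 := by
  have : (vecPoly a : PowerSeries ℂ) =
      ∑ i : Fin k, PowerSeries.C (a i) * PowerSeries.X ^ (i : ℕ) := by
    rw [vecPoly, ← Polynomial.coeToPowerSeries.ringHom_apply, map_sum]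
    simp
  rw [this, Finset.sum_mul, map_sum]
  refine Finset.sum_congr rfl fun i _ => ?_
  rw [mul_assoc, PowerSeries.coeff_C_mul, PowerSeries.coeff_X_pow_mul']
  split_ifs <;> simp

/-- The values `Y_j(x)`. -/
noncomputable def segreVal {k : ℕ} (x : Fin k → ℂ) (j : ℕ) : ℂ := MvPolynomial.eval x (segreY k j)

/-- The derivatives of the `Y_j` at `x` in the direction `v`. -/
noncomputable def segreDer {k : ℕ} (x v : Fin k → ℂ) (j : ℕ) : ℂ :=
  ∑ l, MvPolynomial.eval x (MvPolynomial.pderiv l (segreY k j)) * v l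

lemma segreVal_zero {k : ℕ} (x : Fin k → ℂ) : segreVal x 0 = 1 := by
  simp [segreVal, segreY_zero]

lemma segreVal_succ {k : ℕ} (x : Fin k → ℂ) (j : ℕ) : segreVal x (j + 1) =
    -∑ i : Fin k, if (i : ℕ) ≤ j then x i * segreVal x (j - i) else 0 := by
  simp only [segreVal, segreY_succ, map_neg, map_sum]
  congr 1
  refine Finset.sum_congr rfl fun i _ => ?_
  split_ifs <;> simp

lemma segreDer_zero {k : ℕ} (x v : Fin k → ℂ) : segreDer x v 0 = 0 := by
  simp [segreDer, segreY_zero]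

lemma segreDer_succ {k : ℕ} (x v : Fin k → ℂ) (j : ℕ) : segreDer x v (j + 1) =
    -((∑ i : Fin k, if (i : ℕ) ≤ j then x i * segreDer x v (j - i) else 0) +
      ∑ i : Fin k, if (i : ℕ) ≤ j then v i * segreVal x (j - i) else 0) := by
  rw [← Finset.sum_add_distrib]
  simp only [segreDer, segreY_succ, map_neg, map_sum, neg_mul, Finset.sum_neg_distrib,
    Finset.sum_mul]
  rw [Finset.sum_comm]
  congr 1
  refine Finset.sum_congr rfl fun i _ => ?_
  split_ifs
  · simp only [MvPolynomial.pderiv_mul, MvPolynomial.pderiv_X, map_add, map_mul,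
      MvPolynomial.eval_X, add_mul, Finset.sum_add_distrib, Finset.mul_sum, segreVal]
    rw [add_comm]
    congr 1
    · exact Finset.sum_congr rfl fun l _ => by ring
    · rw [Finset.sum_eq_single i]
      · simp [mul_comm]
      · intro b _ hb
        simp [hb.symm]
      · simp
  · simp

lemma chernPoly_mul_segre {k : ℕ} (x : Fin k → ℂ) :
    (chernPoly x : PowerSeries ℂ) * PowerSeries.mk (segreVal x) = 1 := by
  rw [chernPoly, Polynomial.coe_add, Polynomial.coe_mul, Polynomial.coe_one, Polynomial.coe_X,
    add_mul, one_mul, mul_assoc]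
  ext m
  rcases m with _ | m
  · simp [segreVal_zero]
  · rw [map_add, PowerSeries.coeff_succ_X_mul, coeff_vecPoly_mul, PowerSeries.coeff_mk,
      segreVal_succ]
    simp [PowerSeries.coeff_one]

lemma chernPoly_mul_segreDer {k : ℕ} (x v : Fin k → ℂ) :
    (chernPoly x : PowerSeries ℂ) * PowerSeries.mk (segreDer x v) +
      PowerSeries.X * ((vecPoly v : PowerSeries ℂ) * PowerSeries.mk (segreVal x)) = 0 := by
  rw [chernPoly, Polynomial.coe_add, Polynomial.coe_mul, Polynomial.coe_one, Polynomial.coe_X,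
    add_mul, one_mul, mul_assoc]
  ext m
  rcases m with _ | m
  · simp [segreDer_zero]
  · rw [map_add, map_add, PowerSeries.coeff_succ_X_mul, PowerSeries.coeff_succ_X_mul,
      coeff_vecPoly_mul, coeff_vecPoly_mul, PowerSeries.coeff_mk, segreDer_succ]
    simp

/-! ### Solutions as factorizations of `1 + c tⁿ` -/

lemma sol_iff_segreVal {n k : ℕ} (hk : 1 ≤ k) (hkn : k ≤ n) (c : ℂ) (x : Fin k → ℂ) :
    (∀ i, MvPolynomial.eval x (quantumRelation k n c i) = 0) ↔
      (∀ m, n - k < m → m < n → segreVal x m = 0) ∧ segreVal x n = -c := by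
  constructor
  · intro h
    refine ⟨fun m h1 h2 => ?_, ?_⟩
    · have := h ⟨m - (n - k + 1), by omega⟩
      rw [quantumRelation, if_pos (by simp only; omega)] at this
      simp only at this
      rwa [show n - k + 1 + (m - (n - k + 1)) = m by omega] at this
    · have := h ⟨k - 1, by omega⟩
      rw [quantumRelation, if_neg (by simp only; omega)] at this
      simp only [map_add, MvPolynomial.eval_C] at this
      exact eq_neg_of_add_eq_zero_left this
  · rintro ⟨h1, h2⟩ i
    have := i.2
    rw [quantumRelation]
    split_ifs with hi
    · exact h1 _ (by omega) (by omega)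
    · rw [map_add, MvPolynomial.eval_C]
      change segreVal x n + c = 0
      rw [h2, neg_add_cancel]

/-- A series that vanishes in degrees `n-k+1, …, n-1` is, up to terms of degree `> n`, its
truncation to degree `≤ n-k` plus its term of degree `n`. -/
lemma mk_eq_trunc_add {n k : ℕ} (hk : 1 ≤ k) (hkn : k ≤ n) (f : ℕ → ℂ)
    (hf : ∀ m, n - k < m → m < n → f m = 0) :
    ∃ E : PowerSeries ℂ, PowerSeries.mk f =
      (PowerSeries.trunc (n - k + 1) (PowerSeries.mk f) : PowerSeries ℂ) +
        PowerSeries.X ^ n * PowerSeries.C (f n) + PowerSeries.X ^ (n + 1) * E := by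
  refine ⟨PowerSeries.mk fun m => f (n + 1 + m), ?_⟩
  ext m
  simp only [map_add, Polynomial.coeff_coe, PowerSeries.coeff_trunc, PowerSeries.coeff_mk,
    PowerSeries.coeff_X_pow_mul', PowerSeries.coeff_C]
  rcases lt_trichotomy m n with h | h | h
  · by_cases h' : m < n - k + 1
    · simp [h', h.not_ge, show ¬ (n + 1 ≤ m) by omega]
    · simp [h', h.not_ge, show ¬ (n + 1 ≤ m) by omega, hf m (by omega) h]
  · subst h
    simp [show ¬ (m < m - k + 1) by omega]
  · simp [show ¬ (m < n - k + 1) by omega, h.le, show m - n ≠ 0 by omega,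
      show n + 1 ≤ m by omega, show n + 1 + (m - (n + 1)) = m by omega]

lemma natDegree_trunc_le (m : ℕ) (f : PowerSeries ℂ) :
    (PowerSeries.trunc (m + 1) f).natDegree ≤ m :=
  Nat.lt_succ_iff.1 (PowerSeries.natDegree_trunc_lt f m)

lemma poly_eq_of_series {A B : ℂ[X]} {n : ℕ} (hA : A.natDegree ≤ n) (hB : B.natDegree ≤ n)
    (E : PowerSeries ℂ) (h : (A : PowerSeries ℂ) = (B : PowerSeries ℂ) + PowerSeries.X ^ (n + 1) * E) : A = B := by
  ext m
  by_cases hm : m ≤ n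
  · have := congrArg (PowerSeries.coeff m) h
    simpa [PowerSeries.coeff_X_pow_mul', show ¬ (n + 1 ≤ m) by omega] using this
  · rw [coeff_eq_zero_of_natDegree_lt (by omega), coeff_eq_zero_of_natDegree_lt (by omega)]

lemma coe_chernPoly {k : ℕ} (x : Fin k → ℂ) :
    (chernPoly x : PowerSeries ℂ) = 1 + PowerSeries.X * (vecPoly x : PowerSeries ℂ) := by
  simp [chernPoly]

lemma target_natDegree_le (n : ℕ) (c : ℂ) : (1 + C c * X ^ n : ℂ[X]).natDegree ≤ n := by
  compute_degree

lemma chernPoly_mul_trunc {n k : ℕ} (hk : 1 ≤ k) (hkn : k ≤ n) (c : ℂ) (x : Fin k → ℂ)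
    (h1 : ∀ m, n - k < m → m < n → segreVal x m = 0) (h2 : segreVal x n = -c) :
    chernPoly x * PowerSeries.trunc (n - k + 1) (PowerSeries.mk (segreVal x)) =
      1 + C c * X ^ n := by
  obtain ⟨E, hE⟩ := mk_eq_trunc_add hk hkn _ h1
  have hP := chernPoly_mul_segre x
  rw [hE, h2] at hP
  refine poly_eq_of_series (n := n) ?_ (target_natDegree_le n c)
    (PowerSeries.C c * (vecPoly x : PowerSeries ℂ) - (chernPoly x : PowerSeries ℂ) * E) ?_
  · refine natDegree_mul_le.trans ?_
    have := natDegree_trunc_le (n - k) (PowerSeries.mk (segreVal x))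
    have := chernPoly_natDegree_le x
    omega
  · have hc := coe_chernPoly x
    simp only [Polynomial.coe_add, Polynomial.coe_mul, Polynomial.coe_one, Polynomial.coe_X,
      Polynomial.coe_pow, Polynomial.coe_C, map_neg] at hP ⊢
    linear_combination hP + PowerSeries.X ^ n * PowerSeries.C c * hc

lemma sol_iff {n k : ℕ} (hk : 1 ≤ k) (hkn : k ≤ n) (c : ℂ) (x : Fin k → ℂ) :
    (∀ i, MvPolynomial.eval x (quantumRelation k n c i) = 0) ↔
      ∃ Q : ℂ[X], Q.natDegree ≤ n - k ∧ chernPoly x * Q = 1 + C c * X ^ n := by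
  rw [sol_iff_segreVal hk hkn]
  constructor
  · rintro ⟨h1, h2⟩
    exact ⟨_, natDegree_trunc_le _ _, chernPoly_mul_trunc hk hkn c x h1 h2⟩
  · rintro ⟨Q, hQ, h⟩
    have hP := chernPoly_mul_segre x
    have h' := congrArg (fun p : ℂ[X] => (p : PowerSeries ℂ)) h
    simp only [Polynomial.coe_add, Polynomial.coe_mul, Polynomial.coe_one, Polynomial.coe_X,
      Polynomial.coe_pow, Polynomial.coe_C] at h'
    have key : PowerSeries.mk (segreVal x) = (Q : PowerSeries ℂ) -
        PowerSeries.X ^ n * (PowerSeries.C c * PowerSeries.mk (segreVal x)) := by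
      linear_combination (-PowerSeries.mk (segreVal x)) * h' + (Q : PowerSeries ℂ) * hP
    have hm (m : ℕ) := congrArg (PowerSeries.coeff m) key
    simp only [map_sub, PowerSeries.coeff_mk, Polynomial.coeff_coe, PowerSeries.coeff_X_pow_mul',
      PowerSeries.coeff_C_mul] at hm
    refine ⟨fun m h1 h2 => ?_, ?_⟩
    · rw [hm, coeff_eq_zero_of_natDegree_lt (by omega), if_neg (by omega), sub_zero]
    · rw [hm, coeff_eq_zero_of_natDegree_lt (by omega), if_pos le_rfl, Nat.sub_self,
        segreVal_zero, mul_one, zero_sub]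

lemma target_separable {n : ℕ} (hn : n ≠ 0) {c : ℂ} (hc : c ≠ 0) :
    (1 + C c * X ^ n : ℂ[X]).Separable := by
  have h : (X ^ n - C (-c⁻¹) : ℂ[X]).Separable :=
    separable_X_pow_sub_C _ (by exact_mod_cast hn) (by simpa using hc)
  have e : (1 + C c * X ^ n : ℂ[X]) = C c * (X ^ n - C (-c⁻¹)) := by
    rw [mul_sub, ← C_mul]
    simp [hc, add_comm]
  rw [e]
  exact h.unit_mul (isUnit_C.2 hc.isUnit)

lemma target_natDegree {n : ℕ} (hn : n ≠ 0) {c : ℂ} (hc : c ≠ 0) :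
    (1 + C c * X ^ n : ℂ[X]).natDegree = n := by
  compute_degree!
  simpa [hn] using hc

/-! ### Counting the factors -/

/-- The polynomial with constant term `1` whose roots are the (nonzero) elements of `S`. -/
noncomputable def rootPoly (S : Finset ℂ) : ℂ[X] := ∏ a ∈ S, (1 - C a⁻¹ * X)

lemma rootPoly_natDegree_le (S : Finset ℂ) : (rootPoly S).natDegree ≤ S.card := by
  refine (natDegree_prod_le _ _).trans ?_
  rw [Finset.card_eq_sum_ones]
  refine Finset.sum_le_sum fun a _ => ?_
  compute_degree

lemma rootPoly_coeff_zero (S : Finset ℂ) : (rootPoly S).coeff 0 = 1 := by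
  simp [rootPoly, coeff_zero_eq_eval_zero, eval_prod]

lemma rootPoly_eq (S : Finset ℂ) (hS : (0 : ℂ) ∉ S) :
    rootPoly S = C (∏ a ∈ S, (-a⁻¹)) * ∏ a ∈ S, (X - C a) := by
  rw [rootPoly, map_prod, ← Finset.prod_mul_distrib]
  refine Finset.prod_congr rfl fun a ha => ?_
  have : a ≠ 0 := fun h => hS (h ▸ ha)
  rw [mul_sub, ← C_mul]
  simp [this]
  ring

lemma rootPoly_roots (S : Finset ℂ) (hS : (0 : ℂ) ∉ S) : (rootPoly S).roots = S.val := by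
  have : ∏ a ∈ S, (-a⁻¹) ≠ 0 := by
    refine Finset.prod_ne_zero_iff.2 fun a ha => ?_
    have : a ≠ 0 := fun h => hS (h ▸ ha)
    simpa using this
  rw [rootPoly_eq S hS, roots_C_mul _ this, roots_prod_X_sub_C]

lemma zero_not_mem_roots {G : ℂ[X]} (h0 : G.coeff 0 = 1) : (0 : ℂ) ∉ G.roots.toFinset := by
  intro h
  have := (mem_roots'.1 (Multiset.mem_toFinset.1 h)).2
  rw [IsRoot.def, ← coeff_zero_eq_eval_zero, h0] at this
  exact one_ne_zero this

lemma card_roots_toFinset {G : ℂ[X]} (hG : G.Separable) :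
    G.roots.toFinset.card = G.natDegree := by
  rw [Multiset.toFinset_card_of_nodup (nodup_roots hG)]
  exact (splits_iff_card_roots.1 (IsAlgClosed.splits G))

/-- A separable polynomial with constant term `1` is determined by its set of roots: both sides
are multiples of `∏ (t - a)` with the same value at `0`. -/
lemma eq_rootPoly {G : ℂ[X]} (hG : G.Separable) (h0 : G.coeff 0 = 1) :
    G = rootPoly G.roots.toFinset := by
  have hS := zero_not_mem_roots h0
  have e1 : G = C G.leadingCoeff * ∏ a ∈ G.roots.toFinset, (X - C a) := by
    have := (IsAlgClosed.splits G).eq_prod_roots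
    rw [Finset.prod_eq_multiset_prod, Multiset.toFinset_val,
      Multiset.dedup_eq_self.2 (nodup_roots hG)]
    exact this
  have e2 := rootPoly_eq _ hS
  have h1 := rootPoly_coeff_zero G.roots.toFinset
  have h0' := h0
  rw [e1, coeff_zero_eq_eval_zero, eval_mul, eval_C] at h0'
  rw [e2, coeff_zero_eq_eval_zero, eval_mul, eval_C] at h1
  have hne : eval 0 (∏ a ∈ G.roots.toFinset, (X - C a)) ≠ 0 := by
    intro h
    rw [h, mul_zero] at h1
    exact zero_ne_one h1
  rw [e2, ← mul_right_cancel₀ hne (h0'.trans h1.symm)]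
  exact e1

lemma natDegree_factor {n k : ℕ} (hkn : k ≤ n) {F Q : ℂ[X]} (hF : F.Separable)
    (hn : F.natDegree = n) {x : Fin k → ℂ} (hQ : Q.natDegree ≤ n - k) (h : chernPoly x * Q = F) :
    (chernPoly x).natDegree = k := by
  have hne : chernPoly x * Q ≠ 0 := by rw [h]; exact hF.ne_zero
  have := natDegree_mul (left_ne_zero_of_mul hne) (right_ne_zero_of_mul hne)
  rw [h, hn] at this
  have := chernPoly_natDegree_le x
  omega

lemma factors_eq_image {n k : ℕ} (hkn : k ≤ n) {F : ℂ[X]} (hF : F.Separable)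
    (hn : F.natDegree = n) (h0 : F.coeff 0 = 1) :
    {x : Fin k → ℂ | ∃ Q : ℂ[X], Q.natDegree ≤ n - k ∧ chernPoly x * Q = F} =
      (fun (S : Finset ℂ) (i : Fin k) => (rootPoly S).coeff (i + 1)) ''
        (Finset.powersetCard k F.roots.toFinset : Set (Finset ℂ)) := by
  ext x
  simp only [Set.mem_ofPred_eq, Set.mem_image, Finset.mem_coe, Finset.mem_powersetCard]
  constructor
  · rintro ⟨Q, hQ, h⟩
    have hsep : (chernPoly x).Separable := hF.of_dvd ⟨Q, h.symm⟩
    refine ⟨(chernPoly x).roots.toFinset, ⟨?_, ?_⟩, ?_⟩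
    · exact Multiset.toFinset_subset.2 (Multiset.subset_of_le
        (roots.le_of_dvd hF.ne_zero ⟨Q, h.symm⟩))
    · rw [card_roots_toFinset hsep, natDegree_factor hkn hF hn hQ h]
    · rw [← eq_rootPoly hsep (chernPoly_coeff_zero x)]
      ext i
      exact chernPoly_coeff_succ x i
  · rintro ⟨S, ⟨hS, hc⟩, rfl⟩
    rw [chernPoly_surj _ (hc ▸ rootPoly_natDegree_le S) (rootPoly_coeff_zero S)]
    refine ⟨rootPoly (F.roots.toFinset \ S), (rootPoly_natDegree_le _).trans ?_, ?_⟩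
    · rw [Finset.card_sdiff_of_subset hS, card_roots_toFinset hF, hn, hc]
    · conv_rhs => rw [eq_rootPoly hF h0]
      rw [mul_comm]
      exact Finset.prod_sdiff hS

lemma ncard_factors {n k : ℕ} (hkn : k ≤ n) {F : ℂ[X]} (hF : F.Separable)
    (hn : F.natDegree = n) (h0 : F.coeff 0 = 1) :
    {x : Fin k → ℂ | ∃ Q : ℂ[X], Q.natDegree ≤ n - k ∧ chernPoly x * Q = F}.ncard =
      n.choose k := by
  rw [factors_eq_image hkn hF hn h0, Set.InjOn.ncard_image, Set.ncard_coe_finset,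
    Finset.card_powersetCard, card_roots_toFinset hF, hn]
  intro S hS T hT hST
  simp only [Finset.mem_coe, Finset.mem_powersetCard] at hS hT
  have h : rootPoly S = rootPoly T := by
    rw [← chernPoly_surj (k := k) _ (hS.2 ▸ rootPoly_natDegree_le S) (rootPoly_coeff_zero S),
      ← chernPoly_surj (k := k) _ (hT.2 ▸ rootPoly_natDegree_le T) (rootPoly_coeff_zero T)]
    exact congrArg chernPoly hST
  have hr := congrArg roots h
  have hz := zero_not_mem_roots h0
  rwa [rootPoly_roots S fun h => hz (hS.1 h), rootPoly_roots T fun h => hz (hT.1 h),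
    Finset.val_inj] at hr

/-! ### The Jacobian -/

/-- The derivative of `P Q = 1 + c tⁿ` along a kernel vector `v` of the Jacobian. -/
lemma exists_derivative_relation {n k : ℕ} (hk : 1 ≤ k) (hkn : k ≤ n) (x v : Fin k → ℂ)
    (h1 : ∀ m, n - k < m → m < n → segreVal x m = 0)
    (hv : ∀ m, n - k < m → m ≤ n → segreDer x v m = 0) :
    ∃ Q' : ℂ[X], chernPoly x * Q' + X * vecPoly v *
      PowerSeries.trunc (n - k + 1) (PowerSeries.mk (segreVal x)) = 0 := by
  obtain ⟨E, hE⟩ := mk_eq_trunc_add hk hkn _ h1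
  obtain ⟨E', hE'⟩ := mk_eq_trunc_add hk hkn _ fun m a b => hv m a b.le
  rw [hv n (by omega) le_rfl] at hE'
  have hP := chernPoly_mul_segreDer x v
  rw [hE, hE'] at hP
  refine ⟨PowerSeries.trunc (n - k + 1) (PowerSeries.mk (segreDer x v)), ?_⟩
  refine poly_eq_of_series (n := n) ?_ (by simp)
    (-((chernPoly x : PowerSeries ℂ) * E' + (vecPoly v : PowerSeries ℂ) *
      (PowerSeries.C (segreVal x n) + PowerSeries.X * E))) ?_
  · have a1 := natDegree_trunc_le (n - k) (PowerSeries.mk (segreVal x))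
    have a2 := natDegree_trunc_le (n - k) (PowerSeries.mk (segreDer x v))
    have a3 := chernPoly_natDegree_le x
    have a4 : (X * vecPoly v).natDegree ≤ k := by
      have h := chernPoly_natDegree_le v
      rw [chernPoly, ← C_1, natDegree_C_add] at h
      exact h
    refine natDegree_add_le_of_degree_le (natDegree_mul_le.trans ?_) (natDegree_mul_le.trans ?_)
    all_goals omega
  · simp only [Polynomial.coe_add, Polynomial.coe_mul, Polynomial.coe_X, Polynomial.coe_zero,
      map_zero] at hP ⊢
    linear_combination hP

lemma jacobian_mulVec {n k : ℕ} (hkn : k ≤ n) (c : ℂ) (x v : Fin k → ℂ)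
    (hv : ∀ i, ∑ j, MvPolynomial.eval x (MvPolynomial.pderiv j (quantumRelation k n c i)) * v j = 0)
    (m : ℕ) (h1 : n - k < m) (h2 : m ≤ n) : segreDer x v m = 0 := by
  have h := hv ⟨m - (n - k + 1), by omega⟩
  simp only [quantumRelation] at h
  split_ifs at h with hm
  · rwa [show n - k + 1 + (m - (n - k + 1)) = m by omega] at h
  · obtain rfl : m = n := by omega
    simpa [segreDer] using h

/-- For `1 ≤ k ≤ n` and `c ≠ 0`, the system
`Y_{n-k+1} = 0, …, Y_{n-1} = 0, Yₙ + c = 0` has exactly `binomial(n,k)` solutions in `ℂᵏ`,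
and at every solution the Jacobian determinant of `(Y_{n-k+1}, …, Y_{n-1}, Yₙ + c)` is
nonzero. -/
theorem quantum_grassmannian_relations_solutions
    (n k : ℕ) (hk : 1 ≤ k) (hkn : k ≤ n) (c : ℂ) (hc : c ≠ 0) :
    {x : Fin k → ℂ | ∀ i, MvPolynomial.eval x (quantumRelation k n c i) = 0}.Finite ∧
    {x : Fin k → ℂ | ∀ i, MvPolynomial.eval x (quantumRelation k n c i) = 0}.ncard =
      Nat.choose n k ∧
    ∀ x : Fin k → ℂ, (∀ i, MvPolynomial.eval x (quantumRelation k n c i) = 0) →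
      MvPolynomial.eval x
        (Matrix.det (Matrix.of fun i j : Fin k =>
          MvPolynomial.pderiv j (quantumRelation k n c i))) ≠ 0 := by
  have hn : n ≠ 0 := by omega
  have hF := target_separable hn hc
  have hdeg := target_natDegree hn hc
  have h0 : (1 + C c * X ^ n : ℂ[X]).coeff 0 = 1 := by simp [coeff_X_pow, hn.symm]
  refine ⟨?_, ?_, ?_⟩
  · simp only [sol_iff hk hkn]
    rw [factors_eq_image hkn hF hdeg h0]
    exact (Finset.finite_toSet _).image _
  · simp only [sol_iff hk hkn]
    exact ncard_factors hkn hF hdeg h0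
  · intro x hx hdet
    obtain ⟨h1, h2⟩ := (sol_iff_segreVal hk hkn c x).1 hx
    rw [RingHom.map_det] at hdet
    obtain ⟨v, hv0, hv⟩ := Matrix.exists_mulVec_eq_zero_iff.2 hdet
    refine hv0 ?_
    have hv' (i : Fin k) := congrFun hv i
    simp only [Matrix.mulVec, dotProduct, RingHom.mapMatrix_apply, Matrix.map_apply,
      Matrix.of_apply, Pi.zero_apply] at hv'
    obtain ⟨Q', hQ'⟩ := exists_derivative_relation hk hkn x v h1 (jacobian_mulVec hkn c x v hv')
    have hPQ := chernPoly_mul_trunc hk hkn c x h1 h2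
    have hcop := Separable.isCoprime (hPQ ▸ hF)
    have hcopX : IsCoprime (chernPoly x) X := ⟨1, -vecPoly x, by rw [chernPoly]; ring⟩
    have hdvd : chernPoly x ∣ vecPoly v := by
      have h := hcop.dvd_of_dvd_mul_right
        (⟨-Q', by linear_combination hQ'⟩ : chernPoly x ∣ X * vecPoly v * _)
      exact hcopX.dvd_of_dvd_mul_left h
    have hPk := natDegree_factor hkn hF hdeg (natDegree_trunc_le _ _) hPQ
    have hP0 : chernPoly x ≠ 0 := by
      intro h
      rw [h, natDegree_zero] at hPk
      omega
    have hW : vecPoly v = 0 := by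
      refine eq_zero_of_dvd_of_degree_lt hdvd ?_
      rw [degree_eq_natDegree hP0, hPk]
      exact vecPoly_degree_lt v
    ext i
    rw [← vecPoly_coeff v i, hW, coeff_zero, Pi.zero_apply]
end

section
/- Let 1 ≤ k ≤ n. There exists a polynomial W ∈ ℂ[X₁,…,X_k] (the Landau–Ginzburg potential) such that ∂W/∂Xᵢ = Y_{n+1−i} for i = 1,…,k, and such that substituting Xᵢ ↦ (−1)ⁱ eᵢ(λ₁,…,λ_k) (the i-th elementary symmetric polynomial, with alternating sign) into W yields −(1/(n+1)) ∑_{i=1}^{k} λᵢ^{n+1} in ℂ[λ₁,…,λ_k]. -/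
/-- The generic polynomial `1 + X₁ t + ⋯ + X_k t^k`, as a power series in `t`; the variable `Xᵢ`
has index `i - 1` in `Fin k`. -/
noncomputable def chernSeries (k : ℕ) : PowerSeries (MvPolynomial (Fin k) ℂ) :=
  1 + ∑ i : Fin k, PowerSeries.C (MvPolynomial.X i) * PowerSeries.X ^ (i.val + 1)

/-- The generating series `∑ Y_j t^j`. -/
noncomputable def segreSeries (k : ℕ) : PowerSeries (MvPolynomial (Fin k) ℂ) :=
  PowerSeries.mk (segreY k)

/-- The derivation `∂/∂Xᵢ` applied to each coefficient of a power series. -/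
noncomputable def coeffDeriv {k : ℕ} (i : Fin k) (f : PowerSeries (MvPolynomial (Fin k) ℂ)) :
    PowerSeries (MvPolynomial (Fin k) ℂ) :=
  PowerSeries.mk fun m => MvPolynomial.pderiv i (PowerSeries.coeff m f)

/-- The Euler operator `t d/dt` on power series. -/
noncomputable def eulerOp {R : Type*} [CommRing R] (f : PowerSeries R) : PowerSeries R :=
  PowerSeries.mk fun m => (m : R) * PowerSeries.coeff m f

lemma coeff_eulerOp {R : Type*} [CommRing R] (m : ℕ) (f : PowerSeries R) :
    PowerSeries.coeff m (eulerOp f) = (m : R) * PowerSeries.coeff m f :=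
  PowerSeries.coeff_mk _ _

lemma coeffDeriv_mul {k : ℕ} (i : Fin k) (f g : PowerSeries (MvPolynomial (Fin k) ℂ)) :
    coeffDeriv i (f * g) = coeffDeriv i f * g + f * coeffDeriv i g := by
  ext1 m
  simp only [coeffDeriv, PowerSeries.coeff_mk, PowerSeries.coeff_mul, map_sum, map_add,
    ← Finset.sum_add_distrib, Derivation.leibniz, smul_eq_mul]
  exact Finset.sum_congr rfl fun x _ => by ring

lemma eulerOp_mul {R : Type*} [CommRing R] (f g : PowerSeries R) :
    eulerOp (f * g) = eulerOp f * g + f * eulerOp g := by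
  ext1 m
  simp only [eulerOp, PowerSeries.coeff_mk, PowerSeries.coeff_mul, map_add,
    ← Finset.sum_add_distrib, Finset.mul_sum]
  refine Finset.sum_congr rfl fun x hx => ?_
  rw [← Finset.HasAntidiagonal.mem_antidiagonal.mp hx]
  push_cast
  ring

lemma coeffDeriv_eulerOp {k : ℕ} (i : Fin k) (f : PowerSeries (MvPolynomial (Fin k) ℂ)) :
    coeffDeriv i (eulerOp f) = eulerOp (coeffDeriv i f) := by
  ext1 m
  simp [coeffDeriv, eulerOp, Derivation.leibniz]

lemma eulerOp_one {R : Type*} [CommRing R] : eulerOp (1 : PowerSeries R) = 0 := by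
  ext1 m
  rcases m with _ | m <;> simp [eulerOp, PowerSeries.coeff_one]

lemma coeffDeriv_one {k : ℕ} (i : Fin k) : coeffDeriv i 1 = 0 := by
  ext1 m
  rcases m with _ | m <;> simp [coeffDeriv, PowerSeries.coeff_one]

lemma coeff_zero_chernSeries (k : ℕ) : PowerSeries.coeff 0 (chernSeries k) = 1 := by
  simp [chernSeries]

lemma coeff_succ_chernSeries (k j : ℕ) : PowerSeries.coeff (j + 1) (chernSeries k) =
    if h : j < k then MvPolynomial.X ⟨j, h⟩ else 0 := by
  simp only [chernSeries, map_add, map_sum, PowerSeries.coeff_one, PowerSeries.coeff_C_mul,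
    PowerSeries.coeff_X_pow, if_neg j.succ_ne_zero, zero_add]
  split_ifs with h
  · rw [Finset.sum_eq_single ⟨j, h⟩]
    · simp
    · intro b _ hb
      rw [if_neg, mul_zero]
      exact fun h1 => hb (Fin.ext (by simp; omega))
    · simp
  · refine Finset.sum_eq_zero fun i _ => ?_
    rw [if_neg (by omega), mul_zero]

lemma coeffDeriv_chernSeries {k : ℕ} (i : Fin k) :
    coeffDeriv i (chernSeries k) = PowerSeries.X ^ (i.val + 1) := by
  ext1 m
  rw [coeffDeriv, PowerSeries.coeff_mk, PowerSeries.coeff_X_pow]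
  rcases m with _ | j
  · simp [coeff_zero_chernSeries]
  · rw [coeff_succ_chernSeries]
    split_ifs with h h' h'
    · have : i = ⟨j, h⟩ := Fin.ext (by simp; omega)
      simp [this]
    · rw [MvPolynomial.pderiv_X_of_ne]
      rintro rfl
      simp at h'
    · omega
    · simp

lemma chernSeries_mul_segreSeries (k : ℕ) : chernSeries k * segreSeries k = 1 := by
  ext1 m
  simp only [chernSeries, segreSeries, add_mul, one_mul, Finset.sum_mul, map_add, map_sum,
    mul_assoc, PowerSeries.coeff_C_mul, PowerSeries.coeff_X_pow_mul', PowerSeries.coeff_mk]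
  rcases m with _ | j
  · simp [segreY]
  · rw [segreY, PowerSeries.coeff_one, if_neg (by omega), neg_add_eq_zero]
    simp only [mul_ite, mul_zero, ← Finset.sum_filter]
    refine Finset.sum_bij (fun i _ => Fin.castLE (min_le_right (j + 1) k) i) ?_ ?_ ?_ ?_
    · intro i _
      have := i.isLt
      simp
      omega
    · intro a _ b _ h
      simpa [Fin.ext_iff] using h
    · intro b hb
      have hb' : b.val + 1 ≤ j + 1 := by simpa using hb
      exact ⟨⟨b.val, by have := b.isLt; omega⟩, Finset.mem_univ _, rfl⟩
    · intro i _
      simp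

/-- The identity `∂ᵢ(θP · Y) = θ(tⁱ Y)`; the exponent is shifted because `Fin k` counts from `0`. -/
lemma coeffDeriv_eulerOp_mul_segreSeries {k : ℕ} (i : Fin k) :
    coeffDeriv i (eulerOp (chernSeries k) * segreSeries k) =
      eulerOp (PowerSeries.X ^ (i.val + 1) * segreSeries k) := by
  have h := chernSeries_mul_segreSeries k
  have hD := congrArg (coeffDeriv i) h
  have hE := congrArg eulerOp h
  rw [coeffDeriv_mul, coeffDeriv_one, coeffDeriv_chernSeries] at hD
  rw [eulerOp_mul, eulerOp_one] at hE
  rw [coeffDeriv_mul, coeffDeriv_eulerOp, coeffDeriv_chernSeries, eulerOp_mul]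
  -- Both `∂ᵢY = -tⁱ Y²` and `θY = -θP · Y²` follow on multiplying by `Y`.
  linear_combination (eulerOp (chernSeries k) * segreSeries k) * hD -
    (PowerSeries.X ^ (i.val + 1) * segreSeries k) * hE +
    (PowerSeries.X ^ (i.val + 1) * eulerOp (segreSeries k) -
      eulerOp (chernSeries k) * coeffDeriv i (segreSeries k)) * h

/-- The generating series `∑ (-1)^m e_m t^m = ∏ (1 - λᵢ t)`. -/
noncomputable def esymmSeries (k : ℕ) : PowerSeries (MvPolynomial (Fin k) ℂ) :=
  PowerSeries.mk fun m => (-1) ^ m * MvPolynomial.esymm (Fin k) ℂ m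

/-- The generating series `∑_{m ≥ 1} p_m t^m` of the power sums; the constant term is `0`, not
`p₀ = k`. -/
noncomputable def psumSeries (k : ℕ) : PowerSeries (MvPolynomial (Fin k) ℂ) :=
  PowerSeries.mk fun m => if m = 0 then 0 else MvPolynomial.psum (Fin k) ℂ m

/-- Newton's identities in generating-series form. -/
lemma eulerOp_esymmSeries (k : ℕ) :
    eulerOp (esymmSeries k) = -(esymmSeries k * psumSeries k) := by
  ext1 m
  simp only [eulerOp, esymmSeries, psumSeries, map_neg, PowerSeries.coeff_mk,
    PowerSeries.coeff_mul]
  have hs : ((-1 : MvPolynomial (Fin k) ℂ) ^ m) * (-1) ^ m = 1 := by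
    rw [← mul_pow]; simp
  rw [mul_left_comm, MvPolynomial.mul_esymm_eq_sum, ← mul_assoc, pow_succ, ← mul_assoc, hs,
    one_mul, neg_one_mul, Finset.sum_filter]
  congr 1
  refine Finset.sum_congr rfl fun x hx => ?_
  have := Finset.HasAntidiagonal.mem_antidiagonal.mp hx
  by_cases h : x.2 = 0
  · rw [if_neg (by omega), if_pos h, mul_zero]
  · rw [if_pos (by omega), if_neg h]

/-- The substitution `Xᵢ ↦ (-1)ⁱ eᵢ(λ)`. -/
noncomputable def esymmSubst (k : ℕ) : MvPolynomial (Fin k) ℂ →ₐ[ℂ] MvPolynomial (Fin k) ℂ :=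
  MvPolynomial.aeval (fun i : Fin k =>
    (-1 : MvPolynomial (Fin k) ℂ) ^ (i.val + 1) * MvPolynomial.esymm (Fin k) ℂ (i.val + 1))

lemma map_chernSeries (k : ℕ) :
    PowerSeries.map (esymmSubst k : MvPolynomial (Fin k) ℂ →+* MvPolynomial (Fin k) ℂ)
      (chernSeries k) = esymmSeries k := by
  ext1 m
  rw [PowerSeries.coeff_map, esymmSeries, PowerSeries.coeff_mk]
  rcases m with _ | j
  · simp [coeff_zero_chernSeries]
  · rw [coeff_succ_chernSeries]
    split_ifs with h
    · simp [esymmSubst]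
    · have : MvPolynomial.esymm (Fin k) ℂ (j + 1) = 0 := by
        rw [MvPolynomial.esymm, Finset.powersetCard_eq_empty.mpr (by simp; omega),
          Finset.sum_empty]
      simp [this]

lemma map_eulerOp {R S : Type*} [CommRing R] [CommRing S] (φ : R →+* S) (f : PowerSeries R) :
    PowerSeries.map φ (eulerOp f) = eulerOp (PowerSeries.map φ f) := by
  ext1 m
  simp [eulerOp]

lemma map_eulerOp_mul_segreSeries (k : ℕ) :
    PowerSeries.map (esymmSubst k : MvPolynomial (Fin k) ℂ →+* MvPolynomial (Fin k) ℂ)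
      (eulerOp (chernSeries k) * segreSeries k) = -psumSeries k := by
  have h := congrArg
    (PowerSeries.map (esymmSubst k : MvPolynomial (Fin k) ℂ →+* MvPolynomial (Fin k) ℂ))
    (chernSeries_mul_segreSeries k)
  rw [map_mul, map_chernSeries, map_one] at h
  rw [map_mul, map_eulerOp, map_chernSeries, eulerOp_esymmSeries]
  linear_combination -psumSeries k * h

/-- For `1 ≤ k ≤ n` there is a Landau–Ginzburg potential
`W ∈ ℂ[X₁,…,X_k]` with `∂W/∂Xᵢ = Y_{n+1-i}` for `i = 1,…,k`, and such that substituting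
`Xᵢ ↦ (-1)ⁱ eᵢ(λ₁,…,λ_k)` (elementary symmetric polynomials with alternating signs)
into `W` yields `-(1/(n+1)) ∑_{i=1}^k λᵢ^{n+1}`. -/
theorem landau_ginzburg_potential_exists
    (n k : ℕ) (hk : 1 ≤ k) (hkn : k ≤ n) :
    ∃ W : MvPolynomial (Fin k) ℂ,
      (∀ i : Fin k, MvPolynomial.pderiv i W = segreY k (n - i.val)) ∧
      MvPolynomial.aeval
          (fun i : Fin k =>
            (-1 : MvPolynomial (Fin k) ℂ) ^ (i.val + 1) *
              MvPolynomial.esymm (Fin k) ℂ (i.val + 1)) W =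
        -(MvPolynomial.C (((n : ℂ) + 1)⁻¹) *
          ∑ i : Fin k, MvPolynomial.X i ^ (n + 1)) := by
  have hn : ((n : ℂ) + 1) ≠ 0 := by exact_mod_cast n.succ_ne_zero
  refine ⟨MvPolynomial.C (((n : ℂ) + 1)⁻¹) *
    PowerSeries.coeff (n + 1) (eulerOp (chernSeries k) * segreSeries k), fun i => ?_, ?_⟩
  · have h := congrArg (PowerSeries.coeff (n + 1)) (coeffDeriv_eulerOp_mul_segreSeries i)
    have hi := i.isLt
    rw [coeffDeriv, PowerSeries.coeff_mk, coeff_eulerOp,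
      PowerSeries.coeff_X_pow_mul', if_pos (by omega), segreSeries, PowerSeries.coeff_mk,
      Nat.add_sub_add_right] at h
    have hc : (((n + 1 : ℕ) : MvPolynomial (Fin k) ℂ)) = MvPolynomial.C ((n : ℂ) + 1) := by
      simp
    rw [MvPolynomial.pderiv_C_mul, segreSeries, h, hc, ← mul_assoc, ← map_mul,
      inv_mul_cancel₀ hn, map_one, one_mul]
  · have h := congrArg (PowerSeries.coeff (n + 1)) (map_eulerOp_mul_segreSeries k)
    rw [PowerSeries.coeff_map, map_neg, psumSeries, PowerSeries.coeff_mk,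
      if_neg n.succ_ne_zero, MvPolynomial.psum] at h
    change esymmSubst k _ = _
    rw [map_mul]
    erw [h]
    simp [esymmSubst]
end

section
/- For every integer k ≥ 1, the coefficient of the monomial λ₁^{k−1} λ₂^{k−1} ⋯ λ_k^{k−1} in the squared Vandermonde polynomial ∏_{1 ≤ i < j ≤ k} (λᵢ − λⱼ)² ∈ ℂ[λ₁,…,λ_k] equals (−1)^{k(k−1)/2} · k!. -/
/-!
By the Vandermonde determinant formula, `∏_{i < j} (λᵢ - λⱼ)²` is the square of
`∑ σ, sign σ • ∏ i, λᵢ ^ σ(i)`. Expanding the square, a pair `(σ, τ)` contributes to the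
monomial `∏ i, λᵢ ^ (k - 1)` exactly when `σ(i) + τ(i) = k - 1` for all `i`, that is, when
`τ = rev ∘ σ` with `rev` the order reversal of `Fin k`. Each of the `k!` permutations `σ` then
contributes `sign σ * sign (rev ∘ σ) = sign rev = (-1) ^ (k (k - 1) / 2)`.
-/

/-- Every pair `i < j` is an inversion of the order reversal. -/
lemma sign_revPerm_eq (k : ℕ) :
    Equiv.Perm.sign (Fin.revPerm : Equiv.Perm (Fin k)) = (-1) ^ (k * (k - 1) / 2) := by
  have h : ∀ j : Fin k, (∏ i ∈ Finset.Iio j,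
      if (Fin.revPerm i : Fin k) < Fin.revPerm j then (1 : ℤˣ) else -1) = (-1) ^ (j : ℕ) := by
    intro j
    rw [Finset.prod_congr rfl (g := fun _ => (-1 : ℤˣ))]
    · simp
    · intro i hi
      have hij : i < j := by simpa using hi
      simp [hij.le]
  rw [Equiv.Perm.sign_eq_prod_prod_Iio, Finset.prod_congr rfl (fun j _ => h j),
    Finset.prod_pow_eq_pow_sum, Fin.sum_univ_eq_sum_range (fun i => i), Finset.sum_range_id]

/-- The exponents `σ(i)` and `τ(i)` add up to `k - 1` throughout iff `τ = rev ∘ σ`. -/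
lemma exponents_add_eq_iff {k : ℕ} (σ τ : Equiv.Perm (Fin k)) :
    (Finsupp.equivFunOnFinite.symm (fun i => (σ i : ℕ)) +
        Finsupp.equivFunOnFinite.symm (fun i => (τ i : ℕ)) =
      Finsupp.equivFunOnFinite.symm fun _ : Fin k => k - 1) ↔ τ = Fin.revPerm * σ := by
  rw [Finsupp.ext_iff, Equiv.ext_iff]
  refine forall_congr' fun i => ?_
  simp only [Finsupp.add_apply, Finsupp.equivFunOnFinite_symm_apply_apply, Equiv.Perm.mul_apply,
    Fin.revPerm_apply, Fin.ext_iff, Fin.val_rev]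
  have h1 := (σ i).isLt
  have h2 := (τ i).isLt
  omega

lemma det_vandermonde_X_eq_sum_monomial (k : ℕ) :
    (Matrix.vandermonde (MvPolynomial.X : Fin k → MvPolynomial (Fin k) ℂ)).det =
      ∑ σ : Equiv.Perm (Fin k), MvPolynomial.monomial
        (Finsupp.equivFunOnFinite.symm fun i => (σ i : ℕ)) ((Equiv.Perm.sign σ : ℤ) : ℂ) := by
  rw [← Matrix.det_transpose, Matrix.det_apply']
  refine Finset.sum_congr rfl fun σ _ => ?_
  rw [MvPolynomial.monomial_eq, Finsupp.prod_fintype _ _ (by simp)]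
  simp [Matrix.vandermonde_apply]

lemma prod_sub_sq_eq_det_vandermonde_sq (k : ℕ) :
    (∏ p ∈ Finset.univ.filter (fun p : Fin k × Fin k => p.1 < p.2),
      (MvPolynomial.X p.1 - MvPolynomial.X p.2 : MvPolynomial (Fin k) ℂ) ^ 2) =
    (Matrix.vandermonde (MvPolynomial.X : Fin k → MvPolynomial (Fin k) ℂ)).det ^ 2 := by
  rw [Matrix.det_vandermonde, Finset.prod_filter, Fintype.prod_prod_type, ← Finset.prod_pow]
  refine Finset.prod_congr rfl fun i _ => ?_
  rw [← Finset.prod_filter, ← Finset.prod_pow]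
  refine Finset.prod_congr (by ext; simp) fun j _ => by ring

/-- For every `k ≥ 1`, the coefficient of the monomial
`λ₁^{k-1} λ₂^{k-1} ⋯ λ_k^{k-1}` in the squared Vandermonde polynomial
`∏_{i < j} (λᵢ - λⱼ)²` equals `(-1)^{k(k-1)/2} · k!`. -/
theorem squared_vandermonde_central_coefficient (k : ℕ) (hk : 1 ≤ k) :
    MvPolynomial.coeff (Finsupp.equivFunOnFinite.symm fun _ : Fin k => k - 1)
        (∏ p ∈ Finset.univ.filter (fun p : Fin k × Fin k => p.1 < p.2),
          (MvPolynomial.X p.1 - MvPolynomial.X p.2 : MvPolynomial (Fin k) ℂ) ^ 2) =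
      (-1 : ℂ) ^ (k * (k - 1) / 2) * Nat.factorial k := by
  classical
  rw [prod_sub_sq_eq_det_vandermonde_sq, det_vandermonde_X_eq_sum_monomial, sq,
    Finset.sum_mul_sum]
  simp only [MvPolynomial.monomial_mul, MvPolynomial.coeff_sum, MvPolynomial.coeff_monomial,
    exponents_add_eq_iff, Finset.sum_ite_eq', Finset.mem_univ, if_true]
  have h : ∀ σ : Equiv.Perm (Fin k), ((Equiv.Perm.sign σ : ℤ) : ℂ) *
      ((Equiv.Perm.sign (Fin.revPerm * σ) : ℤ) : ℂ) = (-1) ^ (k * (k - 1) / 2) := by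
    intro σ
    rw [← Int.cast_mul, ← Units.val_mul, Equiv.Perm.sign_mul, mul_left_comm,
      Int.units_mul_self, mul_one, sign_revPerm_eq]
    simp
  simp only [h, Finset.sum_const, Finset.card_univ, Fintype.card_perm, Fintype.card_fin,
    nsmul_eq_mul]
  ring
end
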